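/- Let n ≥ 1 be an integer, θ ∈ (0, π/2), 1 ≤ k ≤ n, and let φ : C_θ → (0,∞) be smooth. There exists a constant C > 0 (depending only on n, k, θ and φ) such that: every smooth capillary function s on C_θ with τ[s] > 0 satisfying σ_k(τ[s])(ζ) = φ(ζ) for all ζ ∈ C_θ obeys σ_1(τ[s])(ζ) ≤ C for all ζ ∈ C_θ; equivalently, the trace of the Hessian D²G(u) of the 1-homogeneous extension G of s satisfies trace(D²G(u)) ≤ C for every u ∈ S^n_θ. -/

import Mathlib

open MeasureTheory Real Set
open scoped RealInnerProductSpace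

noncomputable section

abbrev V (n : ℕ) := EuclideanSpace ℝ (Fin (n + 1))

/-- The vertical unit vector `E_{n+1}`. -/
def Etop (n : ℕ) : V n := EuclideanSpace.single (Fin.last n) 1

/-- The spherical cap `S^n_θ`. -/
def sphCap (n : ℕ) (θ : ℝ) : Set (V n) :=
  {u | ‖u‖ = 1 ∧ Real.cos θ ≤ u (Fin.last n)}

/-- The boundary circle `∂S^n_θ`. -/
def sphCapBdry (n : ℕ) (θ : ℝ) : Set (V n) :=
  {u | ‖u‖ = 1 ∧ u (Fin.last n) = Real.cos θ}

/-- The capillary cap `C_θ`. -/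
def capCap (n : ℕ) (θ : ℝ) : Set (V n) :=
  {ζ | 0 ≤ ζ (Fin.last n) ∧ ‖ζ + Real.cos θ • Etop n‖ = 1}

/-- The open cone over `S^n_θ`. -/
def coneCap (n : ℕ) (θ : ℝ) : Set (V n) :=
  {x | ∃ l : ℝ, 0 < l ∧ ∃ u ∈ sphCap n θ, x = l • u}

/-- `G` is a positively 1-homogeneous extension of `g : C_θ → ℝ` which is `C^m` on an
open neighborhood of the cone over `S^n_θ`. -/
def IsHomExt (n : ℕ) (θ : ℝ) (m : ℕ∞) (g G : V n → ℝ) : Prop :=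
  (∃ U : Set (V n), IsOpen U ∧ coneCap n θ ⊆ U ∧ ContDiffOn ℝ m G U) ∧
  (∀ l : ℝ, 0 < l → ∀ u ∈ sphCap n θ, G (l • u) = l * G u) ∧
  (∀ ζ ∈ capCap n θ, G (ζ + Real.cos θ • Etop n) = g ζ)

/-- The Hessian of `G` at `u` as a quadratic/bilinear form. -/
def hessQ (n : ℕ) (G : V n → ℝ) (u v w : V n) : ℝ :=
  fderiv ℝ (fderiv ℝ G) u v w

/-- The Hessian matrix `D²G(u)` in the standard coordinates. -/
def hessM (n : ℕ) (G : V n → ℝ) (u : V n) : Matrix (Fin (n + 1)) (Fin (n + 1)) ℝ :=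
  fun i j => fderiv ℝ (fderiv ℝ G) u (EuclideanSpace.single i 1) (EuclideanSpace.single j 1)

/-- `σ_j` of the eigenvalues of `D²G(u)` (via characteristic polynomial coefficients). -/
def sigmaElem (n : ℕ) (j : ℕ) (G : V n → ℝ) (u : V n) : ℝ :=
  (-1 : ℝ) ^ j * ((hessM n G u).charpoly.coeff (n + 1 - j))

/-- `τ[g] ≥ 0` : the Hessian of the extension is positive semidefinite on `S^n_θ`. -/
def TauNonneg (n : ℕ) (θ : ℝ) (G : V n → ℝ) : Prop :=
  ∀ u ∈ sphCap n θ, ∀ v : V n, 0 ≤ hessQ n G u v v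

/-- `τ[g] > 0`. -/
def TauPos (n : ℕ) (θ : ℝ) (G : V n → ℝ) : Prop :=
  TauNonneg n θ G ∧
  ∀ u ∈ sphCap n θ, ∀ v : V n, v ≠ 0 → ⟪v, u⟫ = 0 → 0 < hessQ n G u v v

/-- Capillary (Robin) boundary condition: `∂_{n+1}G = 0` on `∂S^n_θ`. -/
def IsCapillaryF (n : ℕ) (θ : ℝ) (G : V n → ℝ) : Prop :=
  ∀ u ∈ sphCapBdry n θ, fderiv ℝ G u (Etop n) = 0

/-- Reflection negating the horizontal coordinates. -/
def horizNeg (n : ℕ) (ζ : V n) : V n := (2 * ζ (Fin.last n)) • Etop n - ζ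

/-- Support function of a set. -/
def suppFn (n : ℕ) (K : Set (V n)) (u : V n) : ℝ := sSup ((fun y => ⟪u, y⟫) '' K)

/-- Relative interior (within the hyperplane `{x_{n+1}=0}`) of the base `K ∩ {x_{n+1}=0}`. -/
def relintBase (n : ℕ) (K : Set (V n)) : Set (V n) :=
  {x | x (Fin.last n) = 0 ∧ ∃ ε > 0, ∀ y : V n, y (Fin.last n) = 0 → ‖y - x‖ < ε → y ∈ K}

/-- A `θ`-capillary convex body. -/
def IsCapBody (n : ℕ) (θ : ℝ) (K : Set (V n)) : Prop :=
  IsCompact K ∧ Convex ℝ K ∧ (interior K).Nonempty ∧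
  (∀ x ∈ K, 0 ≤ x (Fin.last n)) ∧
  (∀ x ∈ K, 0 < x (Fin.last n) → ∀ u : V n, ‖u‖ = 1 → ⟪u, x⟫ = suppFn n K u →
    Real.cos θ ≤ u (Fin.last n)) ∧
  (∀ v : V n, ‖v‖ = 1 → v (Fin.last n) = 0 →
    suppFn n K (Real.sin θ • v + Real.cos θ • Etop n) = Real.sin θ * suppFn n K v) ∧
  (relintBase n K).Nonempty

/-- `ψ` is one of `x²`, `x^p (p<0)`, `-log x`. -/
def PsiOK (ψ : ℝ → ℝ) : Prop :=
  (ψ = fun x : ℝ => x ^ 2) ∨ (∃ p : ℝ, p < 0 ∧ ψ = fun x : ℝ => x ^ p) ∨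
    (ψ = fun x : ℝ => -Real.log x)


open Topology Filter

/-- Elementary symmetric polynomial of degree `k` in the entries of `x` indexed by `S`. -/
def esym {ι : Type*} (k : ℕ) (S : Finset ι) (x : ι → ℝ) : ℝ :=
  ∑ T ∈ S.powersetCard k, ∏ i ∈ T, x i

/-- The quotient `σ_{k+1} / σ_k`. -/
def esymQuot {ι : Type*} (k : ℕ) (S : Finset ι) (x : ι → ℝ) : ℝ :=
  esym (k + 1) S x / esym k S x

section Esym

variable {ι : Type*}

lemma esym_zero (S : Finset ι) (x : ι → ℝ) : esym 0 S x = 1 := by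
  simp [esym]

lemma esym_one (S : Finset ι) (x : ι → ℝ) : esym 1 S x = ∑ i ∈ S, x i := by
  simp [esym, Finset.powersetCard_one]

lemma esym_nonneg (k : ℕ) {S : Finset ι} {x : ι → ℝ} (h : ∀ i ∈ S, 0 ≤ x i) :
    0 ≤ esym k S x :=
  Finset.sum_nonneg fun _ hT => Finset.prod_nonneg fun i hi =>
    h i ((Finset.mem_powersetCard.1 hT).1 hi)

lemma esym_pos {k : ℕ} {S : Finset ι} (hk : k ≤ S.card) {x : ι → ℝ} (h : ∀ i ∈ S, 0 < x i) :
    0 < esym k S x :=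
  Finset.sum_pos (fun _ hT => Finset.prod_pos fun i hi =>
    h i ((Finset.mem_powersetCard.1 hT).1 hi)) (Finset.powersetCard_nonempty.2 hk)

lemma esymQuot_smul {t : ℝ} (ht : t ≠ 0) (k : ℕ) (S : Finset ι) (x : ι → ℝ) :
    esymQuot k S (t • x) = t * esymQuot k S x := by
  have h : ∀ m, esym m S (t • x) = t ^ m * esym m S x := by
    intro m
    unfold esym
    rw [Finset.mul_sum]
    refine Finset.sum_congr rfl fun T hT => ?_
    simp [Finset.prod_mul_distrib, (Finset.mem_powersetCard.1 hT).2]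
  rw [esymQuot, esymQuot, h, h, pow_succ]
  field_simp

lemma parallel_sum_superadditive {a b c d q : ℝ} (ha : 0 < a) (hb : 0 ≤ b) (hc : 0 < c)
    (hd : 0 ≤ d) (hq : b + d ≤ q) :
    a * (b / (a + b)) + c * (d / (c + d)) ≤ (a + c) * (q / (a + c + q)) := by
  have h1 : (a + c) * ((b + d) / (a + c + (b + d))) ≤ (a + c) * (q / (a + c + q)) := by
    apply mul_le_mul_of_nonneg_left _ (by positivity)
    rw [div_le_div_iff₀ (by positivity) (by linarith)]
    nlinarith
  refine le_trans ?_ h1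
  rw [← mul_div_assoc, ← mul_div_assoc, ← mul_div_assoc,
    div_add_div _ _ (by positivity) (by positivity), div_le_div_iff₀ (by positivity) (by positivity)]
  nlinarith [sq_nonneg (a * d - b * c)]

lemma esymQuot_nonneg (k : ℕ) {S : Finset ι} {x : ι → ℝ} (h : ∀ i ∈ S, 0 ≤ x i) :
    0 ≤ esymQuot k S x :=
  div_nonneg (esym_nonneg _ h) (esym_nonneg _ h)

lemma esymQuot_pos {k : ℕ} {S : Finset ι} (hk : k < S.card) {x : ι → ℝ} (h : ∀ i ∈ S, 0 < x i) :
    0 < esymQuot k S x :=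
  div_pos (esym_pos hk h) (esym_pos hk.le h)

lemma esym_succ_empty (k : ℕ) (x : ι → ℝ) : esym (k + 1) ∅ x = 0 := by
  rw [esym, Finset.powersetCard_eq_empty.2 (by simp), Finset.sum_empty]

lemma log_esym_eq_sum {k : ℕ} {S : Finset ι} (hk : k ≤ S.card) {x : ι → ℝ}
    (hx : ∀ i ∈ S, 0 < x i) :
    Real.log (esym k S x) = ∑ j ∈ Finset.range k, Real.log (esymQuot j S x) := by
  induction k with
  | zero => simp [esym_zero]
  | succ k ih =>
    rw [Finset.sum_range_succ, ← ih (by omega), esymQuot, Real.log_div]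
    · ring
    · exact (esym_pos hk hx).ne'
    · exact (esym_pos (by omega) hx).ne'

variable [DecidableEq ι]

lemma esym_insert (k : ℕ) {S : Finset ι} {a : ι} (ha : a ∉ S) (x : ι → ℝ) :
    esym (k + 1) (insert a S) x = x a * esym k S x + esym (k + 1) S x := by
  unfold esym
  rw [Finset.powersetCard_succ_insert ha, Finset.sum_union, add_comm]
  · congr 1
    rw [Finset.sum_image, Finset.mul_sum]
    · refine Finset.sum_congr rfl fun T hT => ?_
      rw [Finset.prod_insert]
      exact fun h => ha ((Finset.mem_powersetCard.1 hT).1 h)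
    · intro T hT T' hT' h
      have h1 : a ∉ T := fun h => ha ((Finset.mem_powersetCard.1 hT).1 h)
      have h2 : a ∉ T' := fun h => ha ((Finset.mem_powersetCard.1 hT').1 h)
      rw [← Finset.erase_insert h1, ← Finset.erase_insert h2]
      exact congrArg (fun U : Finset ι => U.erase a) h
  · rw [Finset.disjoint_left]
    intro T hT hT'
    obtain ⟨U, -, rfl⟩ := Finset.mem_image.1 hT'
    exact ha ((Finset.mem_powersetCard.1 hT).1 (Finset.mem_insert_self a U))

lemma esym_erase (k : ℕ) {S : Finset ι} {a : ι} (ha : a ∈ S) (x : ι → ℝ) :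
    esym (k + 1) S x = x a * esym k (S.erase a) x + esym (k + 1) (S.erase a) x := by
  conv_lhs => rw [← Finset.insert_erase ha]
  exact esym_insert k (Finset.notMem_erase a S) x

lemma esym_eq_erase_of_eq_zero (k : ℕ) {S : Finset ι} {a : ι} (ha : a ∈ S) {x : ι → ℝ}
    (hx : x a = 0) : esym k S x = esym k (S.erase a) x := by
  cases k with
  | zero => simp [esym_zero]
  | succ k => rw [esym_erase k ha, hx]; ring

lemma sum_mul_esym_erase (k : ℕ) (S : Finset ι) (x : ι → ℝ) :
    ∑ i ∈ S, x i * esym k (S.erase i) x = (k + 1) * esym (k + 1) S x := by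
  induction S using Finset.induction_on generalizing k with
  | empty => simp [esym_succ_empty]
  | insert a S ha ih =>
    rw [Finset.sum_insert ha, Finset.erase_insert ha, esym_insert k ha]
    have herase : ∀ i ∈ S, (insert a S).erase i = insert a (S.erase i) := fun i hi =>
      Finset.erase_insert_of_ne (fun h => ha (h ▸ hi))
    have hna : ∀ i, a ∉ S.erase i := fun i h => ha (Finset.mem_of_mem_erase h)
    cases k with
    | zero =>
      simp only [esym_zero, mul_one, zero_add, esym_one]
      simp
    | succ k =>
      have h1 : ∀ i ∈ S, x i * esym (k + 1) ((insert a S).erase i) x =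
          x a * (x i * esym k (S.erase i) x) + x i * esym (k + 1) (S.erase i) x := by
        intro i hi
        rw [herase i hi, esym_insert k (hna i)]
        ring
      rw [Finset.sum_congr rfl h1, Finset.sum_add_distrib, ← Finset.mul_sum, ih k, ih (k + 1)]
      push_cast
      ring

lemma esymQuot_succ_eq {k : ℕ} {S : Finset ι} (hk : k + 1 ≤ S.card) {x : ι → ℝ}
    (h : ∀ i ∈ S, 0 < x i) :
    ((k : ℝ) + 2) * esymQuot (k + 1) S x =
      ∑ i ∈ S, x i * (esymQuot k (S.erase i) x / (x i + esymQuot k (S.erase i) x)) := by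
  have h0 := sum_mul_esym_erase (k + 1) S x
  have hpos : 0 < esym (k + 1) S x := esym_pos hk h
  have h1 : ((k : ℝ) + 2) * esymQuot (k + 1) S x =
      ∑ i ∈ S, x i * (esym (k + 1) (S.erase i) x / esym (k + 1) S x) := by
    simp_rw [← mul_div_assoc]
    rw [← Finset.sum_div, h0, esymQuot]
    push_cast
    ring
  rw [h1]
  refine Finset.sum_congr rfl fun i hi => ?_
  have hc : k ≤ (S.erase i).card := by rw [Finset.card_erase_of_mem hi]; omega
  have hp : 0 < esym k (S.erase i) x := esym_pos hc fun j hj => h j (Finset.mem_of_mem_erase hj)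
  have hi' := h i hi
  have hn : 0 ≤ esym (k + 1) (S.erase i) x :=
    esym_nonneg _ fun j hj => (h j (Finset.mem_of_mem_erase hj)).le
  congr 1
  rw [esym_erase k hi, esymQuot]
  field_simp

/-- Superadditivity of `σ_{k+1} / σ_k` on the positive cone (Marcus and Lopes). -/
lemma esymQuot_superadditive {k : ℕ} {S : Finset ι} (hk : k ≤ S.card) {x y : ι → ℝ}
    (hx : ∀ i ∈ S, 0 < x i) (hy : ∀ i ∈ S, 0 < y i) :
    esymQuot k S x + esymQuot k S y ≤ esymQuot k S (x + y) := by
  induction k generalizing S with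
  | zero =>
    simp [esymQuot, esym_zero, esym_one, Finset.sum_add_distrib]
  | succ k ih =>
    have hxy : ∀ i ∈ S, 0 < (x + y) i := fun i hi => add_pos (hx i hi) (hy i hi)
    have key : ((k : ℝ) + 2) * (esymQuot (k + 1) S x + esymQuot (k + 1) S y) ≤
        ((k : ℝ) + 2) * esymQuot (k + 1) S (x + y) := by
      rw [mul_add, esymQuot_succ_eq hk hx, esymQuot_succ_eq hk hy, esymQuot_succ_eq hk hxy,
        ← Finset.sum_add_distrib]
      refine Finset.sum_le_sum fun i hi => ?_
      have hc : k ≤ (S.erase i).card := by rw [Finset.card_erase_of_mem hi]; omega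
      exact parallel_sum_superadditive (hx i hi)
        (esymQuot_nonneg _ fun j hj => (hx j (Finset.mem_of_mem_erase hj)).le) (hy i hi)
        (esymQuot_nonneg _ fun j hj => (hy j (Finset.mem_of_mem_erase hj)).le)
        (ih hc (fun j hj => hx j (Finset.mem_of_mem_erase hj))
          fun j hj => hy j (Finset.mem_of_mem_erase hj))
    exact le_of_mul_le_mul_left key (by positivity)

lemma hasDerivAt_esym (k : ℕ) (S : Finset ι) (x y : ι → ℝ) :
    HasDerivAt (fun t : ℝ => esym (k + 1) S (x + t • y))
      (∑ i ∈ S, y i * esym k (S.erase i) x) 0 := by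
  induction S using Finset.induction_on generalizing k with
  | empty =>
    have : (fun t : ℝ => esym (k + 1) ∅ (x + t • y)) = fun _ => 0 := by
      funext t; exact esym_succ_empty k _
    rw [this]
    simpa using hasDerivAt_const (0 : ℝ) (0 : ℝ)
  | insert a S ha ih =>
    have hline : HasDerivAt (fun t : ℝ => (x + t • y) a) (y a) 0 := by
      have := ((hasDerivAt_id (0 : ℝ)).mul_const (y a)).const_add (x a)
      simpa using this
    have herase : ∀ i ∈ S, (insert a S).erase i = insert a (S.erase i) := fun i hi =>
      Finset.erase_insert_of_ne (fun h => ha (h ▸ hi))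
    have hna : ∀ i, a ∉ S.erase i := fun i h => ha (Finset.mem_of_mem_erase h)
    have hfun : (fun t : ℝ => esym (k + 1) (insert a S) (x + t • y)) =
        fun t : ℝ => (x + t • y) a * esym k S (x + t • y) + esym (k + 1) S (x + t • y) := by
      funext t; exact esym_insert k ha _
    rw [hfun, Finset.sum_insert ha, Finset.erase_insert ha]
    cases k with
    | zero =>
      simp only [esym_zero, mul_one]
      have := hline.fun_add (ih 0)
      simpa [esym_zero] using this
    | succ k =>
      have := (hline.mul (ih k)).add (ih (k + 1))
      refine this.congr_deriv ?_
      have h1 : ∀ i ∈ S, y i * esym (k + 1) ((insert a S).erase i) x =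
          x a * (y i * esym k (S.erase i) x) + y i * esym (k + 1) (S.erase i) x := by
        intro i hi
        rw [herase i hi, esym_insert k (hna i)]
        ring
      rw [Finset.sum_congr rfl h1, Finset.sum_add_distrib, ← Finset.mul_sum]
      simp
      ring

end Esym

lemma deriv_nonneg_of_nonneg_right {f : ℝ → ℝ} {f' : ℝ} (hf : HasDerivAt f f' 0) (h0 : f 0 = 0)
    (h : ∀ᶠ t in 𝓝[>] (0 : ℝ), 0 ≤ f t) : 0 ≤ f' := by
  have h1 : Tendsto (slope f 0) (𝓝[>] 0) (𝓝 f') :=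
    (hasDerivAt_iff_tendsto_slope.1 hf).mono_left
      (nhdsWithin_mono (0 : ℝ) (fun t (ht : 0 < t) => ht.ne'))
  refine ge_of_tendsto h1 ?_
  filter_upwards [h, self_mem_nhdsWithin] with t ht ht'
  rw [slope_def_field, h0, sub_zero, sub_zero]
  exact div_nonneg ht (le_of_lt ht')

/-- The tangent-plane form of the concavity of `log σ_k` together with homogeneity. -/
lemma log_esym_tangent {ι : Type*} [DecidableEq ι] {k : ℕ} {S : Finset ι} (hk : k + 1 ≤ S.card)
    {x y : ι → ℝ} (hx : ∀ i ∈ S, 0 < x i) (hy : ∀ i ∈ S, 0 < y i) :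
    (k + 1 : ℝ) + Real.log (esym (k + 1) S y) - Real.log (esym (k + 1) S x) ≤
      ∑ i ∈ S, esym k (S.erase i) x / esym (k + 1) S x * y i := by
  have hpos := esym_pos hk hx
  have hqx : ∀ j ∈ Finset.range (k + 1), 0 < esymQuot j S x := fun j hj =>
    esymQuot_pos (by have := Finset.mem_range.1 hj; omega) hx
  have hqy : ∀ j ∈ Finset.range (k + 1), 0 < esymQuot j S y := fun j hj =>
    esymQuot_pos (by have := Finset.mem_range.1 hj; omega) hy
  have hd1 : HasDerivAt (fun t : ℝ => Real.log (esym (k + 1) S (x + t • y)))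
      ((∑ i ∈ S, y i * esym k (S.erase i) x) / esym (k + 1) S x) 0 := by
    have := (hasDerivAt_esym k S x y).log (by simpa using hpos.ne')
    simpa using this
  have hd2 : HasDerivAt
      (fun t : ℝ => ∑ j ∈ Finset.range (k + 1),
        Real.log (esymQuot j S x + t * esymQuot j S y))
      (∑ j ∈ Finset.range (k + 1), esymQuot j S y / esymQuot j S x) 0 := by
    refine HasDerivAt.fun_sum fun j hj => ?_
    have h1 : HasDerivAt (fun t : ℝ => esymQuot j S x + t * esymQuot j S y)
        (esymQuot j S y) 0 := by
      simpa using ((hasDerivAt_id (0 : ℝ)).mul_const (esymQuot j S y)).const_add (esymQuot j S x)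
    simpa using h1.log (by simpa using (hqx j hj).ne')
  have hge := deriv_nonneg_of_nonneg_right (hd1.sub hd2)
    (by simp [log_esym_eq_sum hk hx]) (by
      filter_upwards [self_mem_nhdsWithin] with t ht
      have ht : 0 < t := ht
      have hty : ∀ i ∈ S, 0 < (t • y) i := fun i hi => mul_pos ht (hy i hi)
      have hxy : ∀ i ∈ S, 0 < (x + t • y) i := fun i hi => add_pos (hx i hi) (hty i hi)
      simp only [Pi.sub_apply]
      rw [log_esym_eq_sum hk hxy, ← Finset.sum_sub_distrib]
      refine Finset.sum_nonneg fun j hj => ?_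
      rw [sub_nonneg, ← esymQuot_smul ht.ne']
      refine Real.log_le_log ?_ (esymQuot_superadditive
        (by have := Finset.mem_range.1 hj; omega) hx hty)
      rw [esymQuot_smul ht.ne']
      exact add_pos (hqx j hj) (mul_pos ht (hqy j hj)))
  have hsum : ∑ j ∈ Finset.range (k + 1), (1 + Real.log (esymQuot j S y) -
      Real.log (esymQuot j S x)) ≤
      ∑ j ∈ Finset.range (k + 1), esymQuot j S y / esymQuot j S x := by
    refine Finset.sum_le_sum fun j hj => ?_
    have := Real.log_le_sub_one_of_pos (div_pos (hqy j hj) (hqx j hj))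
    rw [Real.log_div (hqy j hj).ne' (hqx j hj).ne'] at this
    linarith
  rw [Finset.sum_sub_distrib, Finset.sum_add_distrib, ← log_esym_eq_sum hk hx,
    ← log_esym_eq_sum hk hy] at hsum
  have hfin : ∑ i ∈ S, esym k (S.erase i) x / esym (k + 1) S x * y i =
      (∑ i ∈ S, y i * esym k (S.erase i) x) / esym (k + 1) S x := by
    rw [Finset.sum_div]
    exact Finset.sum_congr rfl fun i _ => by ring
  rw [hfin]
  simp at hsum
  linarith

section Esym

variable {ι : Type*} [DecidableEq ι]

lemma sub_mul_esym_erase_sub_nonneg (k : ℕ) {S : Finset ι} {x : ι → ℝ} (hx : ∀ i ∈ S, 0 ≤ x i)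
    {a b : ι} (ha : a ∈ S) (hb : b ∈ S) :
    0 ≤ (x a - x b) * (esym k (S.erase b) x - esym k (S.erase a) x) := by
  by_cases hab : a = b
  · subst hab; simp
  cases k with
  | zero => simp [esym_zero]
  | succ k =>
    rw [esym_erase k (Finset.mem_erase.2 ⟨hab, ha⟩), esym_erase k (Finset.mem_erase.2 ⟨Ne.symm hab, hb⟩),
      Finset.erase_right_comm]
    have h := esym_nonneg k (S := (S.erase a).erase b) (x := x)
      fun i hi => hx i (Finset.mem_of_mem_erase (Finset.mem_of_mem_erase hi))
    have : (x a - x b) * (x a * esym k ((S.erase a).erase b) x +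
        esym (k + 1) ((S.erase a).erase b) x - (x b * esym k ((S.erase a).erase b) x +
        esym (k + 1) ((S.erase a).erase b) x)) =
        (x a - x b) ^ 2 * esym k ((S.erase a).erase b) x := by ring
    rw [this]
    positivity

/-- If `σ_k` is small then so is `σ_{k+1}`, quantitatively. -/
lemma esym_succ_le_of_esym_lt {k : ℕ} {S : Finset ι} {x : ι → ℝ} (hx : ∀ i ∈ S, 0 ≤ x i)
    {r : ℝ} (hr0 : 0 < r) (hr1 : r ≤ 1) (h : esym k S x < r ^ k) :
    esym (k + 1) S x ≤ 2 ^ S.card * r := by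
  have hk : k ≠ 0 := by
    rintro rfl
    simp [esym_zero] at h
  have hterm : ∀ T ∈ S.powersetCard (k + 1), ∏ i ∈ T, x i ≤ r := by
    intro T hT
    obtain ⟨hTS, hTc⟩ := Finset.mem_powersetCard.1 hT
    have hpow : (∏ i ∈ T, x i) ^ k = ∏ i ∈ T, ∏ j ∈ T.erase i, x j := by
      rw [Finset.prod_sigma', ← Finset.prod_pow]
      have : ∏ p ∈ T.sigma (fun i => T.erase i), x p.2 =
          ∏ p ∈ T.sigma (fun i => T.erase i), x p.1 := by
        refine Finset.prod_bij' (fun p _ => ⟨p.2, p.1⟩) (fun p _ => ⟨p.2, p.1⟩) ?_ ?_ ?_ ?_ ?_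
        · intro p hp
          simp only [Finset.mem_sigma, Finset.mem_erase] at hp ⊢
          exact ⟨hp.2.2, fun h => hp.2.1 h.symm, hp.1⟩
        · intro p hp
          simp only [Finset.mem_sigma, Finset.mem_erase] at hp ⊢
          exact ⟨hp.2.2, fun h => hp.2.1 h.symm, hp.1⟩
        all_goals simp
      rw [this, Finset.prod_sigma]
      refine Finset.prod_congr rfl fun i hi => ?_
      simp [Finset.card_erase_of_mem hi, hTc]
    have hle : ∀ i ∈ T, ∏ j ∈ T.erase i, x j ≤ r ^ k := by
      intro i hi
      refine le_trans ?_ h.le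
      refine Finset.single_le_sum (f := fun U : Finset ι => ∏ j ∈ U, x j)
        (fun U hU => Finset.prod_nonneg fun j hj => hx j ((Finset.mem_powersetCard.1 hU).1 hj))
        (Finset.mem_powersetCard.2 ⟨(Finset.erase_subset i T).trans hTS, ?_⟩)
      rw [Finset.card_erase_of_mem hi, hTc]; rfl
    have h1 : (∏ i ∈ T, x i) ^ k ≤ r ^ k := by
      rw [hpow]
      calc ∏ i ∈ T, ∏ j ∈ T.erase i, x j ≤ ∏ _i ∈ T, r ^ k :=
            Finset.prod_le_prod (fun i _ => Finset.prod_nonneg fun j hj =>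
              hx j (hTS (Finset.mem_of_mem_erase hj))) hle
        _ = (r ^ k) ^ (k + 1) := by rw [Finset.prod_const, hTc]
        _ ≤ (r ^ k) ^ 1 := pow_le_pow_of_le_one (by positivity) (pow_le_one₀ hr0.le hr1) (by omega)
        _ = r ^ k := pow_one _
    exact le_of_pow_le_pow_left₀ hk hr0.le h1
  calc esym (k + 1) S x ≤ ∑ _T ∈ S.powersetCard (k + 1), r := Finset.sum_le_sum hterm
    _ = (S.card.choose (k + 1) : ℝ) * r := by
      rw [Finset.sum_const, Finset.card_powersetCard, nsmul_eq_mul]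
    _ ≤ 2 ^ S.card * r := by
      refine mul_le_mul_of_nonneg_right ?_ hr0.le
      exact_mod_cast Nat.choose_le_two_pow _ _

end Esym

section LinearAlgebra

/-- Hadamard's inequality for positive semidefinite matrices. -/
lemma det_le_prod_diag_of_posSemidef {m : Type*} [Fintype m] [DecidableEq m]
    {M : Matrix m m ℝ} (hM : M.PosSemidef) : M.det ≤ ∏ i, M i i := by
  have hdiag : ∀ i, 0 ≤ M i i := fun i => hM.diag_nonneg
  by_cases hz : ∃ i, M i i = 0
  · obtain ⟨i, hi⟩ := hz
    have hcol : M.mulVec (Pi.single i 1) = 0 := by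
      rw [← hM.dotProduct_mulVec_zero_iff]
      simp [hi]
    have hdet : M.det = 0 := by
      rw [← Matrix.exists_mulVec_eq_zero_iff]
      exact ⟨Pi.single i 1, by simp, hcol⟩
    rw [hdet]
    exact Finset.prod_nonneg fun i _ => hdiag i
  · push Not at hz
    have hpos : ∀ i, 0 < M i i := fun i => lt_of_le_of_ne (hdiag i) (hz i).symm
    set D : Matrix m m ℝ := Matrix.diagonal fun i => (√(M i i))⁻¹ with hD
    have hN : (D.conjTranspose * M * D).PosSemidef := hM.conjTranspose_mul_mul_same D
    have hDD : D.conjTranspose = D := by simp [hD]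
    rw [hDD] at hN
    have hNd : ∀ i, (D * M * D) i i = 1 := by
      intro i
      have h1 : √(M i i) ≠ 0 := (Real.sqrt_pos.2 (hpos i)).ne'
      have h2 : √(M i i) * √(M i i) = M i i := Real.mul_self_sqrt (hdiag i)
      simp only [hD, Matrix.mul_diagonal, Matrix.diagonal_mul]
      field_simp
      rw [sq, h2]
    have htr : ∑ i, hN.1.eigenvalues i = Fintype.card m := by
      have := hN.1.trace_eq_sum_eigenvalues
      simp only [Matrix.trace, Matrix.diag, hNd] at this
      simpa using this.symm
    have hdetN : (D * M * D).det ≤ 1 := by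
      rw [hN.1.det_eq_prod_eigenvalues]
      calc ∏ i, (hN.1.eigenvalues i : ℝ) ≤ ∏ i, Real.exp (hN.1.eigenvalues i - 1) :=
            Finset.prod_le_prod (fun i _ => hN.eigenvalues_nonneg i) fun i _ => by
              have := Real.add_one_le_exp (hN.1.eigenvalues i - 1)
              linarith
        _ = 1 := by
            rw [← Real.exp_sum, Finset.sum_sub_distrib, htr]
            simp
    rw [Matrix.det_mul, Matrix.det_mul, hD, Matrix.det_diagonal] at hdetN
    have hprod : (∏ i, (√(M i i))⁻¹) * (∏ i, (√(M i i))⁻¹) * ∏ i, M i i = 1 := by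
      rw [← Finset.prod_mul_distrib, ← Finset.prod_mul_distrib]
      refine Finset.prod_eq_one fun i _ => ?_
      have h1 : √(M i i) ≠ 0 := (Real.sqrt_pos.2 (hpos i)).ne'
      have h2 : √(M i i) * √(M i i) = M i i := Real.mul_self_sqrt (hdiag i)
      field_simp
      rw [sq, h2]
    have hPpos : 0 < ∏ i, M i i := Finset.prod_pos fun i _ => hpos i
    have h3 := mul_le_mul_of_nonneg_right hdetN hPpos.le
    have h4 : (∏ i, (√(M i i))⁻¹) * M.det * (∏ i, (√(M i i))⁻¹) * ∏ i, M i i =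
        M.det * ((∏ i, (√(M i i))⁻¹) * (∏ i, (√(M i i))⁻¹) * ∏ i, M i i) := by ring
    rw [h4, hprod] at h3
    linarith

variable {E : Type*} [NormedAddCommGroup E] [InnerProductSpace ℝ E] [FiniteDimensional ℝ E]

/-- The linear operator representing a bilinear form. -/
def formOp (B : E →L[ℝ] E →L[ℝ] ℝ) : E →ₗ[ℝ] E :=
  ((InnerProductSpace.toDual ℝ E).symm.toLinearEquiv.toLinearMap).comp
    (B.flip : E →L[ℝ] E →L[ℝ] ℝ).toLinearMap

lemma inner_formOp (B : E →L[ℝ] E →L[ℝ] ℝ) (v w : E) : ⟪formOp B w, v⟫ = B v w := by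
  simp [formOp, InnerProductSpace.toDual_symm_apply]

lemma toMatrix_formOp {ι : Type*} [Fintype ι] [DecidableEq ι] (B : E →L[ℝ] E →L[ℝ] ℝ)
    (b : OrthonormalBasis ι ℝ E) :
    LinearMap.toMatrix b.toBasis b.toBasis (formOp B) = Matrix.of fun i j => B (b i) (b j) := by
  ext i j
  rw [LinearMap.toMatrix_apply]
  simp only [OrthonormalBasis.coe_toBasis, OrthonormalBasis.coe_toBasis_repr_apply,
    OrthonormalBasis.repr_apply_apply, Matrix.of_apply]
  rw [real_inner_comm, inner_formOp]

/-- An orthonormal family of eigenvectors of a symmetric form extends to an orthonormal basis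
diagonalizing the form. -/
lemma exists_diagonalizing_basis (B : E →L[ℝ] E →L[ℝ] ℝ) (hB : ∀ v w, B v w = B w v)
    {κ : Type*} [Fintype κ] {v : κ → E} (hv : Orthonormal ℝ v)
    (h1 : ∀ i j, i ≠ j → B (v i) (v j) = 0)
    (h2 : ∀ i w, (∀ j, ⟪v j, w⟫ = 0) → B (v i) w = 0) :
    ∃ (d : ℕ) (b : OrthonormalBasis (κ ⊕ Fin d) ℝ E),
      (∀ i, b (Sum.inl i) = v i) ∧ ∀ i j, i ≠ j → B (b i) (b j) = 0 := by
  set K : Submodule ℝ E := Submodule.span ℝ (Set.range v) with hK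
  set BW : Kᗮ →L[ℝ] Kᗮ →L[ℝ] ℝ := B.bilinearComp Kᗮ.subtypeL Kᗮ.subtypeL with hBW
  have hsymm : (formOp BW).IsSymmetric := by
    intro x y
    rw [inner_formOp, real_inner_comm, inner_formOp]
    simp only [hBW, ContinuousLinearMap.bilinearComp_apply]
    exact hB _ _
  set e := hsymm.eigenvectorBasis rfl with he
  have hperp : ∀ (i : κ) (w : Kᗮ), ⟪v i, (w : E)⟫ = 0 := fun i w =>
    (Submodule.mem_orthogonal K _).1 w.2 _ (Submodule.subset_span ⟨i, rfl⟩)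
  have hon : Orthonormal ℝ (Sum.elim v fun i => (e i : E)) := by
    refine ⟨?_, ?_⟩
    · rintro (i | i)
      · exact hv.1 i
      · exact e.orthonormal.1 i
    · rintro (i | i) (j | j) hij
      · exact hv.2 fun h => hij (by rw [h])
      · exact hperp i _
      · exact (real_inner_comm _ _).trans (hperp j _)
      · exact e.orthonormal.2 fun h => hij (by rw [h])
  have hsp : ⊤ ≤ Submodule.span ℝ (Set.range (Sum.elim v fun i => (e i : E))) := by
    rw [Set.Sum.elim_range, Submodule.span_union, ← hK]
    have h3 : Submodule.span ℝ (Set.range fun i => (e i : E)) = Kᗮ := by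
      have : (Set.range fun i => (e i : E)) = Kᗮ.subtype '' Set.range e := by
        rw [← Set.range_comp]; rfl
      rw [this, ← Submodule.map_span]
      have h4 := e.toBasis.span_eq
      rw [OrthonormalBasis.coe_toBasis] at h4
      rw [h4, Submodule.map_top, Submodule.range_subtype]
    rw [h3, Submodule.sup_orthogonal_of_hasOrthogonalProjection]
  refine ⟨_, OrthonormalBasis.mk hon hsp, fun i => by simp, ?_⟩
  have hmix : ∀ i j, B (v i) (e j) = 0 := fun i j => h2 i _ fun k => hperp k _
  rintro (i | i) (j | j) hij
  · simpa using h1 i j fun h => hij (by rw [h])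
  · simpa using hmix i j
  · rw [hB]
    simpa using hmix j i
  · have h5 : B (e i) (e j) = ⟪formOp BW (e j), e i⟫ := by
      rw [inner_formOp]; simp [hBW]
    have h6 : ⟪formOp BW (e j), e i⟫ = 0 := by
      rw [he, hsymm.apply_eigenvectorBasis, inner_smul_left, ← he,
        e.orthonormal.2 fun h => hij (by rw [h]), mul_zero]
    simpa using h5.trans h6

end LinearAlgebra

lemma sigmaElem_eq_sum_minors {n k : ℕ} (hk : k ≤ n + 1) (G : V n → ℝ) (u : V n)
    {ι : Type*} [Fintype ι] [DecidableEq ι] (b : OrthonormalBasis ι ℝ (V n)) :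
    sigmaElem n k G u = ∑ s ∈ (Finset.univ : Finset ι).powersetCard k,
      ((Matrix.of fun i j => hessQ n G u (b i) (b j)).submatrix
        (Subtype.val : s → ι) (Subtype.val : s → ι)).det := by
  set B : V n →L[ℝ] V n →L[ℝ] ℝ := fderiv ℝ (fderiv ℝ G) u with hB
  have hcard : Fintype.card ι = n + 1 := by
    have h1 := Module.finrank_eq_card_basis b.toBasis
    simpa using h1.symm
  have hM : hessM n G u = LinearMap.toMatrix (EuclideanSpace.basisFun (Fin (n + 1)) ℝ).toBasis
      (EuclideanSpace.basisFun (Fin (n + 1)) ℝ).toBasis (formOp B) := by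
    rw [toMatrix_formOp]
    ext i j
    simp [hessM, hB]
  rw [sigmaElem, hM, LinearMap.charpoly_toMatrix, ← LinearMap.charpoly_toMatrix _ b.toBasis,
    toMatrix_formOp]
  have h := Matrix.charpoly_coeff_eq_sum_minors (Matrix.of fun i j => B (b i) (b j)) k
    (hcard.symm ▸ hk)
  rw [hcard] at h
  rw [h, ← mul_assoc, ← mul_pow]
  simp [hB, hessQ]

lemma sigmaElem_le_esym {n k : ℕ} (hk : k ≤ n + 1) {G : V n → ℝ} {u : V n}
    (hsymm : ∀ v w, hessQ n G u v w = hessQ n G u w v) (hpos : ∀ v, 0 ≤ hessQ n G u v v)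
    {ι : Type*} [Fintype ι] [DecidableEq ι] (b : OrthonormalBasis ι ℝ (V n)) :
    sigmaElem n k G u ≤ esym k Finset.univ fun i => hessQ n G u (b i) (b i) := by
  have hM : (Matrix.of fun i j => hessQ n G u (b i) (b j)).PosSemidef := by
    refine Matrix.PosSemidef.of_dotProduct_mulVec_nonneg ?_ ?_
    · ext i j
      simpa using hsymm _ _
    · intro x
      have h := hpos (∑ i, x i • b i)
      have h2 : hessQ n G u (∑ i, x i • b i) (∑ i, x i • b i) =
          star x ⬝ᵥ ((Matrix.of fun i j => hessQ n G u (b i) (b j)).mulVec x) := by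
        simp only [hessQ, dotProduct, Matrix.mulVec, map_sum, map_smul,
          _root_.sum_apply, _root_.smul_apply, smul_eq_mul,
          Matrix.of_apply, Finset.mul_sum, Pi.star_apply, star_trivial]
        rw [Finset.sum_comm]
        refine Finset.sum_congr rfl fun i _ => Finset.sum_congr rfl fun j _ => by ring
      rwa [h2] at h
  rw [sigmaElem_eq_sum_minors hk G u b, esym]
  refine Finset.sum_le_sum fun s _ => ?_
  refine (det_le_prod_diag_of_posSemidef (hM.submatrix _)).trans (le_of_eq ?_)
  simp only [Matrix.submatrix_apply, Matrix.of_apply]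
  exact Finset.prod_coe_sort s fun i => hessQ n G u (b i) (b i)

lemma sigmaElem_eq_esym {n k : ℕ} (hk : k ≤ n + 1) {G : V n → ℝ} {u : V n}
    {ι : Type*} [Fintype ι] [DecidableEq ι] (b : OrthonormalBasis ι ℝ (V n))
    (hb : ∀ i j, i ≠ j → hessQ n G u (b i) (b j) = 0) :
    sigmaElem n k G u = esym k Finset.univ fun i => hessQ n G u (b i) (b i) := by
  have hM : (Matrix.of fun i j => hessQ n G u (b i) (b j)) =
      Matrix.diagonal fun i => hessQ n G u (b i) (b i) := by
    ext i j
    by_cases h : i = j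
    · subst h; simp
    · simp [h, hb i j h]
  rw [sigmaElem_eq_sum_minors hk G u b, hM, esym]
  refine Finset.sum_congr rfl fun s _ => ?_
  rw [Matrix.submatrix_diagonal _ _ Subtype.val_injective, Matrix.det_diagonal]
  exact Finset.prod_coe_sort s fun i => hessQ n G u (b i) (b i)

lemma sigmaElem_one_eq_sum {n : ℕ} (G : V n → ℝ) (u : V n)
    {ι : Type*} [Fintype ι] [DecidableEq ι] (b : OrthonormalBasis ι ℝ (V n)) :
    sigmaElem n 1 G u = ∑ i, hessQ n G u (b i) (b i) := by
  rw [sigmaElem_eq_sum_minors (by omega) G u b, Finset.powersetCard_one, Finset.sum_map]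
  refine Finset.sum_congr rfl fun i _ => ?_
  have hdef : ((default : ({i} : Finset ι)) : ι) = i := Finset.mem_singleton.1 (Subtype.prop _)
  change Matrix.det (n := ({i} : Finset ι)) _ = _
  rw [Matrix.det_unique]
  simp only [Matrix.submatrix_apply, Matrix.of_apply, hdef]

section Calculus

variable {E : Type*} [NormedAddCommGroup E] [NormedSpace ℝ E]

/-- Directional derivative. -/
def dird (v : E) (f : E → ℝ) (x : E) : ℝ := fderiv ℝ f x v

lemma dird_add_vec (v w : E) (f : E → ℝ) (x : E) : dird (v + w) f x = dird v f x + dird w f x :=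
  map_add _ _ _

lemma dird_sub_vec (v w : E) (f : E → ℝ) (x : E) : dird (v - w) f x = dird v f x - dird w f x :=
  map_sub _ _ _

lemma dird_smul_vec (c : ℝ) (v : E) (f : E → ℝ) (x : E) : dird (c • v) f x = c * dird v f x :=
  map_smul _ _ _

lemma ContDiffOn.dird {U : Set E} (hU : IsOpen U) {f : E → ℝ}
    (hf : ContDiffOn ℝ ((⊤ : ℕ∞) : WithTop ℕ∞) f U) (v : E) :
    ContDiffOn ℝ ((⊤ : ℕ∞) : WithTop ℕ∞) (dird v f) U :=
  (hf.fderiv_of_isOpen hU (by simp)).clm_apply contDiffOn_const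

lemma ContDiffOn.differentiableAt_of_isOpen {F : Type*} [NormedAddCommGroup F] [NormedSpace ℝ F]
    {U : Set E} (hU : IsOpen U) {f : E → F}
    (hf : ContDiffOn ℝ ((⊤ : ℕ∞) : WithTop ℕ∞) f U) {x : E} (hx : x ∈ U) :
    DifferentiableAt ℝ f x :=
  (hf.contDiffAt (hU.mem_nhds hx)).differentiableAt (by simp)

lemma fderiv_fderiv_eq_dird {U : Set E} (hU : IsOpen U) {f : E → ℝ}
    (hf : ContDiffOn ℝ ((⊤ : ℕ∞) : WithTop ℕ∞) f U) {x : E} (hx : x ∈ U) (v w : E) :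
    fderiv ℝ (fderiv ℝ f) x v w = dird v (dird w f) x := by
  have h1 : DifferentiableAt ℝ (fderiv ℝ f) x :=
    ContDiffOn.differentiableAt_of_isOpen hU (hf.fderiv_of_isOpen hU (by simp)) hx
  have h2 : fderiv ℝ (fun y => fderiv ℝ f y w) x v = fderiv ℝ (fderiv ℝ f) x v w := by
    rw [fderiv_clm_apply h1 (differentiableAt_const w)]
    simp
  exact h2.symm

lemma fderiv_fderiv_symm {U : Set E} (hU : IsOpen U) {f : E → ℝ}
    (hf : ContDiffOn ℝ ((⊤ : ℕ∞) : WithTop ℕ∞) f U) {x : E} (hx : x ∈ U) (v w : E) :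
    fderiv ℝ (fderiv ℝ f) x v w = fderiv ℝ (fderiv ℝ f) x w v :=
  ((hf.contDiffAt (hU.mem_nhds hx)).isSymmSndFDerivAt
    (by simpa using WithTop.coe_le_coe.2 (le_top : (2 : ℕ∞) ≤ ⊤))).eq v w

lemma dird_comm {U : Set E} (hU : IsOpen U) {f : E → ℝ}
    (hf : ContDiffOn ℝ ((⊤ : ℕ∞) : WithTop ℕ∞) f U) {x : E} (hx : x ∈ U) (v w : E) :
    dird v (dird w f) x = dird w (dird v f) x := by
  rw [← fderiv_fderiv_eq_dird hU hf hx, fderiv_fderiv_symm hU hf hx, fderiv_fderiv_eq_dird hU hf hx]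

lemma dird_congr {U : Set E} (hU : IsOpen U) {f g : E → ℝ} (h : ∀ x ∈ U, f x = g x) {x : E}
    (hx : x ∈ U) (v : E) : dird v f x = dird v g x := by
  rw [dird, dird, Filter.EventuallyEq.fderiv_eq]
  filter_upwards [hU.mem_nhds hx] with y hy using h y hy

/-- The great circle through `u` with direction `e`. -/
def circ (u e : E) (t : ℝ) : E := Real.cos t • u + Real.sin t • e

lemma circ_zero (u e : E) : circ u e 0 = u := by simp [circ]

lemma hasDerivAt_circ (u e : E) (t : ℝ) :
    HasDerivAt (circ u e) (-Real.sin t • u + Real.cos t • e) t :=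
  ((Real.hasDerivAt_cos t).smul_const u).add ((Real.hasDerivAt_sin t).smul_const e)

lemma continuous_circ (u e : E) : Continuous (circ u e) := by
  unfold circ; fun_prop

lemma hasDerivAt_comp_circ {f : E → ℝ} {u e : E} {t : ℝ}
    (hf : DifferentiableAt ℝ f (circ u e t)) :
    HasDerivAt (fun s => f (circ u e s))
      (-Real.sin t * dird u f (circ u e t) + Real.cos t * dird e f (circ u e t)) t := by
  refine (hf.hasFDerivAt.comp_hasDerivAt t (hasDerivAt_circ u e t)).congr_deriv ?_
  simp [dird]

lemma hasDerivAt_comp_circ_zero {f : E → ℝ} {u : E} (e : E) (hf : DifferentiableAt ℝ f u) :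
    HasDerivAt (fun s => f (circ u e s)) (dird e f u) 0 := by
  have h := hasDerivAt_comp_circ (f := f) (u := u) (e := e) (t := 0) (by rwa [circ_zero])
  simpa [circ_zero] using h

/-- Second derivative of `f` along the great circle at time `0`. -/
def circ2 (u e : E) (f : E → ℝ) : ℝ := dird e (dird e f) u - dird u f u

/-- `h` is twice differentiable at `0` with second derivative `c`. -/
def HasSecondDeriv (h : ℝ → ℝ) (c : ℝ) : Prop :=
  ∃ h' : ℝ → ℝ, (∀ᶠ t in 𝓝 (0 : ℝ), HasDerivAt h (h' t) t) ∧ HasDerivAt h' c 0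

lemma HasSecondDeriv.add {h g : ℝ → ℝ} {c d : ℝ} (hh : HasSecondDeriv h c)
    (hg : HasSecondDeriv g d) : HasSecondDeriv (fun t => h t + g t) (c + d) := by
  obtain ⟨h', h1, h2⟩ := hh
  obtain ⟨g', g1, g2⟩ := hg
  refine ⟨fun t => h' t + g' t, ?_, h2.fun_add g2⟩
  filter_upwards [h1, g1] with t ht gt using ht.fun_add gt

lemma HasSecondDeriv.const_mul {h : ℝ → ℝ} {c : ℝ} (a : ℝ) (hh : HasSecondDeriv h c) :
    HasSecondDeriv (fun t => a * h t) (a * c) := by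
  obtain ⟨h', h1, h2⟩ := hh
  refine ⟨fun t => a * h' t, ?_, h2.const_mul a⟩
  filter_upwards [h1] with t ht using ht.const_mul a

lemma hasSecondDeriv_sum {ι : Type*} (s : Finset ι) {h : ι → ℝ → ℝ} {c : ι → ℝ}
    (hh : ∀ i ∈ s, HasSecondDeriv (h i) (c i)) :
    HasSecondDeriv (fun t => ∑ i ∈ s, h i t) (∑ i ∈ s, c i) := by
  classical
  induction s using Finset.induction_on with
  | empty =>
    simp only [Finset.sum_empty]
    exact ⟨fun _ => 0, Eventually.of_forall fun t => hasDerivAt_const t 0, hasDerivAt_const 0 0⟩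
  | insert a s ha ih =>
    simp only [Finset.sum_insert ha]
    exact (hh a (Finset.mem_insert_self a s)).add
      (ih fun i hi => hh i (Finset.mem_insert_of_mem hi))

lemma HasSecondDeriv.nonneg_of_isLocalMin {h : ℝ → ℝ} {c : ℝ} (hh : HasSecondDeriv h c)
    (hmin : IsLocalMin h 0) : 0 ≤ c := by
  obtain ⟨h', h1, h2⟩ := hh
  have hderiv : deriv h =ᶠ[𝓝 0] h' := by
    filter_upwards [h1] with t ht using ht.deriv
  have hdd : deriv (deriv h) 0 = c := by rw [hderiv.deriv_eq, h2.deriv]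
  by_contra hc
  push Not at hc
  have hmax : IsLocalMax h 0 := isLocalMax_of_deriv_deriv_neg (by rw [hdd]; exact hc)
    hmin.deriv_eq_zero h1.self_of_nhds.continuousAt
  have hconst : h =ᶠ[𝓝 0] fun _ => h 0 := by
    filter_upwards [hmin, hmax] with t ht1 ht2 using le_antisymm ht2 ht1
  have h0 : deriv h =ᶠ[𝓝 0] fun _ => 0 := by
    have := hconst.deriv
    simpa using this
  have : deriv (deriv h) 0 = 0 := by rw [h0.deriv_eq]; simp
  rw [hdd] at this
  exact hc.ne this

lemma hasSecondDeriv_comp_circ {U : Set E} (hU : IsOpen U) {f : E → ℝ}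
    (hf : ContDiffOn ℝ ((⊤ : ℕ∞) : WithTop ℕ∞) f U) {u : E} (hu : u ∈ U) (e : E) :
    HasSecondDeriv (fun t => f (circ u e t)) (circ2 u e f) := by
  refine ⟨fun t => -Real.sin t * dird u f (circ u e t) + Real.cos t * dird e f (circ u e t),
    ?_, ?_⟩
  · have : ∀ᶠ t in 𝓝 (0 : ℝ), circ u e t ∈ U :=
      (continuous_circ u e).continuousAt.eventually_mem (hU.mem_nhds (by rwa [circ_zero]))
    filter_upwards [this] with t ht
    exact hasDerivAt_comp_circ (ContDiffOn.differentiableAt_of_isOpen hU hf ht)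
  · have h1 := hasDerivAt_comp_circ_zero e
      (ContDiffOn.differentiableAt_of_isOpen hU (ContDiffOn.dird hU hf u) hu)
    have h2 := hasDerivAt_comp_circ_zero e
      (ContDiffOn.differentiableAt_of_isOpen hU (ContDiffOn.dird hU hf e) hu)
    refine (((Real.hasDerivAt_sin 0).neg.mul h1).add
      ((Real.hasDerivAt_cos 0).mul h2)).congr_deriv ?_
    simp [circ_zero, circ2]
    ring

/-- Euler's relation. -/
lemma dird_self_of_homogeneous {O : Set E} {h : E → ℝ} {c : ℝ → ℝ} {c' : ℝ}
    (hhom : ∀ x ∈ O, ∀ l : ℝ, 0 < l → h (l • x) = c l * h x) (hc : HasDerivAt c c' 1) {x : E}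
    (hx : x ∈ O) (hd : DifferentiableAt ℝ h x) : dird x h x = c' * h x := by
  have h1 : HasDerivAt (fun l : ℝ => h (l • x)) (dird x h x) 1 := by
    have h2 : HasDerivAt (fun l : ℝ => l • x) x 1 := by
      simpa using (hasDerivAt_id (1 : ℝ)).smul_const x
    have hd' : HasFDerivAt h (fderiv ℝ h x) ((1 : ℝ) • x) := by
      rw [one_smul]; exact hd.hasFDerivAt
    exact hd'.comp_hasDerivAt 1 h2
  have h3 : HasDerivAt (fun l : ℝ => h (l • x)) (c' * h x) 1 := by
    refine (hc.mul_const (h x)).congr_of_eventuallyEq ?_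
    filter_upwards [lt_mem_nhds (zero_lt_one' ℝ)] with l hl using hhom x hx l hl
  exact h1.unique h3

lemma dird_homogeneous {O : Set E} (hO : IsOpen O) (hOl : ∀ x ∈ O, ∀ l : ℝ, 0 < l → l • x ∈ O)
    {h : E → ℝ} {c : ℝ → ℝ}
    (hhom : ∀ x ∈ O, ∀ l : ℝ, 0 < l → h (l • x) = c l * h x)
    (hd : ∀ x ∈ O, DifferentiableAt ℝ h x) (v : E) :
    ∀ x ∈ O, ∀ l : ℝ, 0 < l → dird v h (l • x) = (c l * l⁻¹) * dird v h x := by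
  intro x hx l hl
  have h1 : HasFDerivAt (fun y => h (l • y)) (l • fderiv ℝ h (l • x)) x := by
    have h2 : HasFDerivAt (fun y : E => l • y) (l • ContinuousLinearMap.id ℝ E) x :=
      (hasFDerivAt_id x).const_smul l
    refine ((hd _ (hOl x hx l hl)).hasFDerivAt.comp x h2).congr_fderiv ?_
    ext w; simp
  have h3 : HasFDerivAt (fun y => h (l • y)) (c l • fderiv ℝ h x) x := by
    refine ((hd x hx).hasFDerivAt.const_smul (c l)).congr_of_eventuallyEq ?_
    filter_upwards [hO.mem_nhds hx] with y hy using hhom y hy l hl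
  have h4 := congrArg (fun L : E →L[ℝ] ℝ => L v) (h1.unique h3)
  simp only [_root_.smul_apply, smul_eq_mul] at h4
  rw [dird, dird]
  field_simp
  linarith

end Calculus

section Algebra

variable {ι : Type*}

lemma sum_esym_erase_div_mul [DecidableEq ι] {k : ℕ} {S : Finset ι} (hk : k + 1 ≤ S.card) {x : ι → ℝ}
    (hx : ∀ i ∈ S, 0 < x i) :
    ∑ i ∈ S, esym k (S.erase i) x / esym (k + 1) S x * x i = k + 1 := by
  have hpos := esym_pos hk hx
  have h := sum_mul_esym_erase k S x
  calc ∑ i ∈ S, esym k (S.erase i) x / esym (k + 1) S x * x i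
      = (∑ i ∈ S, x i * esym k (S.erase i) x) / esym (k + 1) S x := by
        rw [Finset.sum_div]; exact Finset.sum_congr rfl fun i _ => by ring
    _ = k + 1 := by rw [h]; field_simp

lemma le_sum_esym_erase_div [DecidableEq ι] {k : ℕ} {S : Finset ι} (hk : k + 1 ≤ S.card) {x : ι → ℝ}
    (hx : ∀ i ∈ S, 0 < x i) {T : ℝ} (hT : 1 ≤ T) (hxT : esym (k + 1) S x ≤ T) :
    ((k : ℝ) + 1) / T ≤ ∑ i ∈ S, esym k (S.erase i) x / esym (k + 1) S x := by
  have hT0 : 0 < T := by linarith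
  have h := log_esym_tangent hk hx (y := fun _ => T) (fun _ _ => hT0)
  have hle : esym (k + 1) S x ≤ esym (k + 1) S fun _ => T := by
    refine hxT.trans ?_
    have h1 : esym (k + 1) S (fun _ => T) = S.card.choose (k + 1) * T ^ (k + 1) := by
      rw [esym, Finset.sum_congr rfl (g := fun _ => T ^ (k + 1))]
      · simp
      · intro s hs
        rw [Finset.prod_const, (Finset.mem_powersetCard.1 hs).2]
    rw [h1]
    have h2 : (1 : ℝ) ≤ S.card.choose (k + 1) := by
      exact_mod_cast Nat.choose_pos hk
    have h3 : T ≤ T ^ (k + 1) := le_self_pow₀ hT (by omega)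
    nlinarith
  have hlog := Real.log_le_log (esym_pos hk hx) hle
  rw [← Finset.sum_mul] at h
  rw [div_le_iff₀ hT0]
  linarith

lemma trace_mul_sum_le {S : Finset ι} {p l q : ι → ℝ} {M : ι → ι → ℝ} {B C : ℝ}
    (hp : ∀ a ∈ S, 0 ≤ p a) (hM : ∀ a ∈ S, ∀ i ∈ S, M a i - M i a = l i - l a)
    (h1 : ∀ a ∈ S, -C ≤ ∑ i ∈ S, p i * M a i + p a * q a)
    (h2 : ∀ a ∈ S, ∑ i ∈ S, M a i + q a ≤ B) :
    (∑ i ∈ S, l i) * ∑ i ∈ S, p i ≤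
      B * ∑ i ∈ S, p i + S.card * (∑ i ∈ S, p i * l i + C) := by
  have s1 : -(S.card * C) ≤ ∑ a ∈ S, (∑ i ∈ S, p i * M a i + p a * q a) := by
    have := Finset.sum_le_sum h1
    simpa using this
  have s2 : ∑ a ∈ S, p a * (∑ i ∈ S, M a i + q a) ≤ ∑ a ∈ S, p a * B :=
    Finset.sum_le_sum fun a ha => mul_le_mul_of_nonneg_left (h2 a ha) (hp a ha)
  have e1 : ∑ a ∈ S, p a * (∑ i ∈ S, M a i + q a) =
      ∑ a ∈ S, ∑ i ∈ S, p i * (M a i - (l i - l a)) + ∑ a ∈ S, p a * q a := by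
    simp only [mul_add, Finset.sum_add_distrib, Finset.mul_sum]
    congr 1
    rw [Finset.sum_comm]
    refine Finset.sum_congr rfl fun a ha => Finset.sum_congr rfl fun i hi => ?_
    rw [← hM a ha i hi]; ring
  have e2 : ∑ a ∈ S, ∑ i ∈ S, p i * (M a i - (l i - l a)) =
      ∑ a ∈ S, ∑ i ∈ S, p i * M a i - S.card * ∑ i ∈ S, p i * l i
        + (∑ i ∈ S, l i) * ∑ i ∈ S, p i := by
    have : ∀ a ∈ S, ∑ i ∈ S, p i * (M a i - (l i - l a)) =
        ∑ i ∈ S, p i * M a i - ∑ i ∈ S, p i * l i + l a * ∑ i ∈ S, p i := by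
      intro a _
      rw [Finset.mul_sum, ← Finset.sum_sub_distrib, ← Finset.sum_add_distrib]
      exact Finset.sum_congr rfl fun i _ => by ring
    rw [Finset.sum_congr rfl this, Finset.sum_add_distrib, Finset.sum_sub_distrib,
      ← Finset.sum_mul]
    simp
  rw [Finset.sum_add_distrib] at s1
  rw [e1, e2, ← Finset.sum_mul] at s2
  linarith

lemma sum_sub_mul_sub (S : Finset ι) (p l : ι → ℝ) (m : ι) :
    ∑ i ∈ S, (p i - p m) * (l m - l i) =
      l m * ∑ i ∈ S, p i - ∑ i ∈ S, p i * l i - S.card * (l m * p m)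
        + p m * ∑ i ∈ S, l i := by
  rw [Finset.mul_sum, Finset.mul_sum, ← Finset.sum_sub_distrib]
  have : (S.card : ℝ) * (l m * p m) = ∑ i ∈ S, l m * p m := by simp
  rw [this, ← Finset.sum_sub_distrib, ← Finset.sum_add_distrib]
  exact Finset.sum_congr rfl fun i _ => by ring

/-- If the anti-correlation of `λ` with the derivatives of `log σ_{k+1}` at the index `m` is
controlled, then the derivative of `log σ_{k+1}` in the direction `m` is bounded below. -/
lemma exists_le_esym_erase_div (N k : ℕ) {m₀ T C κ : ℝ} (hm : 0 < m₀) (hT : 1 ≤ T) (hC : 0 ≤ C)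
    (hκ : 0 < κ) :
    ∃ δ : ℝ, 0 < δ ∧ ∀ {ι : Type} [DecidableEq ι] (S : Finset ι) (x : ι → ℝ), S.card = N →
      k + 1 ≤ N → (∀ i ∈ S, 0 < x i) → m₀ ≤ esym (k + 1) S x → esym (k + 1) S x ≤ T →
      ∀ m ∈ S,
        κ * ∑ i ∈ S, (esym k (S.erase i) x / esym (k + 1) S x
          - esym k (S.erase m) x / esym (k + 1) S x) * (x m - x i) ≤ C →
        δ ≤ esym k (S.erase m) x / esym (k + 1) S x := by
  have hT0 : 0 < T := by linarith
  set c : ℝ := ((k : ℝ) + 1) / T with hc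
  have hc0 : 0 < c := by positivity
  set C₁ : ℝ := 2 * (C / κ + (k + 1)) / c with hC₁
  have hC₁0 : 0 < C₁ := by positivity
  set r : ℝ := min 1 (m₀ / (4 * 2 ^ N)) with hr
  have hr0 : 0 < r := lt_min one_pos (by positivity)
  have hr1 : r ≤ 1 := min_le_left _ _
  have hr2 : 2 ^ N * r ≤ m₀ / 4 := by
    have : r ≤ m₀ / (4 * 2 ^ N) := min_le_right _ _
    calc (2 : ℝ) ^ N * r ≤ 2 ^ N * (m₀ / (4 * 2 ^ N)) := by gcongr
      _ = m₀ / 4 := by field_simp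
  refine ⟨min (c / (2 * (N + 1))) (min (r ^ k / T) (m₀ / (4 * (C₁ * T)))),
    lt_min (by positivity) (lt_min (by positivity) (by positivity)), ?_⟩
  intro ι _ S x hcard hkN hx hσ0 hσT m hmS hbound
  by_contra! hlt
  set σ := esym (k + 1) S x with hσ
  have hσpos : 0 < σ := by linarith
  set p : ι → ℝ := fun i => esym k (S.erase i) x / σ with hp
  change κ * ∑ i ∈ S, (p i - p m) * (x m - x i) ≤ C at hbound
  change p m < _ at hlt
  have hpn : ∀ i ∈ S, 0 ≤ p i := fun i _ =>
    div_nonneg (esym_nonneg k fun j hj => (hx j (Finset.mem_of_mem_erase hj)).le) hσpos.le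
  have hP : c ≤ ∑ i ∈ S, p i := le_sum_esym_erase_div (hcard ▸ hkN) hx hT hσT
  have hpx : ∑ i ∈ S, p i * x i = k + 1 := sum_esym_erase_div_mul (hcard ▸ hkN) hx
  have h1 : p m < c / (2 * (N + 1)) := hlt.trans_le (min_le_left _ _)
  have h2 : p m < r ^ k / T := hlt.trans_le ((min_le_right _ _).trans (min_le_left _ _))
  have h3 : p m < m₀ / (4 * (C₁ * T)) := hlt.trans_le ((min_le_right _ _).trans (min_le_right _ _))
  have hxm := hx m hmS
  have hH : 0 ≤ ∑ i ∈ S, x i := Finset.sum_nonneg fun i hi => (hx i hi).le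
  rw [sum_sub_mul_sub, hpx, hcard] at hbound
  have hb' : x m * ∑ i ∈ S, p i - (k + 1) - N * (x m * p m) + p m * ∑ i ∈ S, x i ≤ C / κ := by
    rw [le_div_iff₀ hκ]; linarith
  have hpm := hpn m hmS
  have h4 : (N : ℝ) * p m ≤ c / 2 := by
    rw [lt_div_iff₀ (by positivity)] at h1
    nlinarith
  have hxm1 : x m ≤ C₁ := by
    rw [hC₁, le_div_iff₀ hc0]
    have a1 : x m * c ≤ x m * ∑ i ∈ S, p i := mul_le_mul_of_nonneg_left hP hxm.le
    have a2 : x m * (N * p m) ≤ x m * (c / 2) := mul_le_mul_of_nonneg_left h4 hxm.le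
    have a3 : 0 ≤ p m * ∑ i ∈ S, x i := mul_nonneg hpm hH
    nlinarith
  have hpe : esym k (S.erase m) x = p m * σ := by
    rw [hp]; field_simp
  have hlt1 : esym k (S.erase m) x < r ^ k := by
    rw [hpe]
    rw [lt_div_iff₀ hT0] at h2
    exact (mul_le_mul_of_nonneg_left hσT hpm).trans_lt h2
  have h5 := esym_succ_le_of_esym_lt
    (fun i hi => (hx i (Finset.mem_of_mem_erase hi)).le) hr0 hr1 hlt1
  have h6 : (2 : ℝ) ^ (S.erase m).card * r ≤ 2 ^ N * r := by
    gcongr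
    · norm_num
    · rw [← hcard]; exact Finset.card_le_card (Finset.erase_subset _ _)
  have h7 : x m * esym k (S.erase m) x ≤ m₀ / 4 := by
    rw [hpe]
    rw [lt_div_iff₀ (by positivity)] at h3
    have : x m * (p m * σ) ≤ C₁ * (p m * T) := by gcongr
    nlinarith
  have h8 : σ = esym (k + 1) (S.erase m) x + x m * esym k (S.erase m) x := by
    rw [hσ]; have := esym_erase k hmS x; linarith
  linarith

end Algebra

section Cap

variable {n : ℕ} {θ : ℝ}

lemma isCompact_sphCap (n : ℕ) (θ : ℝ) : IsCompact (sphCap n θ) := by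
  refine (isCompact_sphere (0 : V n) 1).of_isClosed_subset ?_ fun u hu => by simpa using hu.1
  exact (isClosed_eq continuous_norm continuous_const).inter
    (isClosed_le continuous_const (by fun_prop : Continuous fun u : V n => u (Fin.last n)))

lemma sphCap_subset_coneCap (n : ℕ) (θ : ℝ) : sphCap n θ ⊆ coneCap n θ :=
  fun u hu => ⟨1, one_pos, u, hu, (one_smul ℝ u).symm⟩

lemma norm_Etop (n : ℕ) : ‖Etop n‖ = 1 := by simp [Etop]

lemma Etop_last (n : ℕ) : Etop n (Fin.last n) = 1 := by simp [Etop]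

lemma inner_Etop (x : V n) : ⟪x, Etop n⟫ = x (Fin.last n) := by
  simp [Etop, EuclideanSpace.inner_single_right]

lemma add_mem_sphCap {ζ : V n} (h : ζ ∈ capCap n θ) : ζ + Real.cos θ • Etop n ∈ sphCap n θ :=
  ⟨h.2, by simpa [Etop_last] using h.1⟩

lemma sub_mem_capCap {u : V n} (h : u ∈ sphCap n θ) : u - Real.cos θ • Etop n ∈ capCap n θ :=
  ⟨by simpa [Etop_last] using h.2, by simpa using h.1⟩

/-- The interior of the cone over the cap. -/
def openCone (n : ℕ) (θ : ℝ) : Set (V n) := {x | Real.cos θ * ‖x‖ < x (Fin.last n)}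

lemma isOpen_openCone (n : ℕ) (θ : ℝ) : IsOpen (openCone n θ) :=
  isOpen_lt (by fun_prop) (by fun_prop)

lemma smul_mem_openCone {x : V n} (hx : x ∈ openCone n θ) {l : ℝ} (hl : 0 < l) :
    l • x ∈ openCone n θ := by
  have hx' : Real.cos θ * ‖x‖ < x (Fin.last n) := hx
  change Real.cos θ * ‖l • x‖ < l * x (Fin.last n)
  rw [norm_smul, Real.norm_of_nonneg hl.le]
  nlinarith

lemma openCone_subset_coneCap : openCone n θ ⊆ coneCap n θ := by
  intro x hx
  have hx' : Real.cos θ * ‖x‖ < x (Fin.last n) := hx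
  have hx0 : x ≠ 0 := by rintro rfl; simp at hx'
  have hn : 0 < ‖x‖ := norm_pos_iff.2 hx0
  refine ⟨‖x‖, hn, ‖x‖⁻¹ • x, ⟨?_, ?_⟩, ?_⟩
  · rw [norm_smul, norm_inv, norm_norm, inv_mul_cancel₀ hn.ne']
  · change _ ≤ ‖x‖⁻¹ * x (Fin.last n)
    rw [inv_mul_eq_div, le_div_iff₀ hn]
    exact hx'.le
  · rw [smul_smul, mul_inv_cancel₀ hn.ne', one_smul]

lemma add_smul_Etop_mem_openCone (hθ : θ ∈ Ioo 0 (π / 2)) {u : V n} (hu : u ∈ sphCap n θ) {t : ℝ}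
    (ht : 0 < t) : u + t • Etop n ∈ openCone n θ := by
  have hc0 : 0 < Real.cos θ := Real.cos_pos_of_mem_Ioo ⟨by linarith [hθ.1, hθ.2], hθ.2⟩
  have hc1 : Real.cos θ < 1 := by
    rw [← Real.cos_zero]
    exact Real.cos_lt_cos_of_nonneg_of_le_pi_div_two le_rfl hθ.2.le hθ.1
  change Real.cos θ * ‖u + t • Etop n‖ < u (Fin.last n) + t * Etop n (Fin.last n)
  have h1 : ‖u + t • Etop n‖ ≤ 1 + t := by
    refine (norm_add_le _ _).trans ?_
    rw [norm_smul, norm_Etop, hu.1, Real.norm_of_nonneg ht.le, mul_one]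
  have := hu.2
  rw [Etop_last]
  nlinarith

/-- Euler's relation on the open cone extends to the cap. -/
lemma dird_self_of_openCone (hθ : θ ∈ Ioo 0 (π / 2)) {U : Set (V n)} (hU : IsOpen U)
    (hcap : coneCap n θ ⊆ U) {h : V n → ℝ} (hh : ContDiffOn ℝ ((⊤ : ℕ∞) : WithTop ℕ∞) h U) {c : ℝ}
    (hc : ∀ x ∈ openCone n θ, dird x h x = c * h x) {u : V n} (hu : u ∈ sphCap n θ) :
    dird u h u = c * h u := by
  have huU := hcap (sphCap_subset_coneCap n θ hu)
  have hcont : ContinuousAt (fun x => dird x h x - c * h x) u := by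
    have h1 : ContinuousAt (fderiv ℝ h) u :=
      (hh.continuousOn_fderiv_of_isOpen hU (by simp)).continuousAt (hU.mem_nhds huU)
    have h2 : ContinuousAt h u := hh.continuousOn.continuousAt (hU.mem_nhds huU)
    exact (h1.clm_apply continuousAt_id).sub (continuousAt_const.mul h2)
  have hpath : Tendsto (fun t : ℝ => u + t • Etop n) (𝓝[>] 0) (𝓝 u) := by
    have : ContinuousAt (fun t : ℝ => u + t • Etop n) 0 := by fun_prop
    simpa using this.tendsto.mono_left nhdsWithin_le_nhds
  have hlim := hcont.tendsto.comp hpath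
  have hzero : Tendsto ((fun x => dird x h x - c * h x) ∘ fun t : ℝ => u + t • Etop n) (𝓝[>] 0)
      (𝓝 0) := by
    refine tendsto_const_nhds.congr' ?_
    filter_upwards [self_mem_nhdsWithin] with t ht
    simp [hc _ (add_smul_Etop_mem_openCone hθ hu ht)]
  have := tendsto_nhds_unique hlim hzero
  linarith

/-- `G` is smooth on the open set `U` containing the cone, and positively `1`-homogeneous. -/
structure SmoothHom (n : ℕ) (θ : ℝ) (U : Set (V n)) (G : V n → ℝ) : Prop where
  isOpen : IsOpen U
  coneCap_subset : coneCap n θ ⊆ U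
  contDiffOn : ContDiffOn ℝ ((⊤ : ℕ∞) : WithTop ℕ∞) G U
  hom : ∀ l : ℝ, 0 < l → ∀ u ∈ sphCap n θ, G (l • u) = l * G u

namespace SmoothHom

variable {U : Set (V n)} {G : V n → ℝ}

lemma mem (hG : SmoothHom n θ U G) {u : V n} (hu : u ∈ sphCap n θ) : u ∈ U :=
  hG.coneCap_subset (sphCap_subset_coneCap n θ hu)

lemma hom_openCone (hG : SmoothHom n θ U G) :
    ∀ x ∈ openCone n θ, ∀ l : ℝ, 0 < l → G (l • x) = l * G x := by
  intro x hx l hl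
  obtain ⟨r, hr, u, hu, rfl⟩ := openCone_subset_coneCap hx
  rw [smul_smul, hG.hom _ (mul_pos hl hr) u hu, hG.hom r hr u hu, mul_assoc]

lemma dird_hom (hG : SmoothHom n θ U G) (v : V n) :
    ∀ x ∈ openCone n θ, ∀ l : ℝ, 0 < l → dird v G (l • x) = (l * l⁻¹) * dird v G x :=
  dird_homogeneous (c := fun l => l) (isOpen_openCone n θ) (fun _ hx _ hl => smul_mem_openCone hx hl)
    hG.hom_openCone (fun _ hx => ContDiffOn.differentiableAt_of_isOpen hG.isOpen hG.contDiffOn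
      (hG.coneCap_subset (openCone_subset_coneCap hx))) v

lemma dird_dird_hom (hG : SmoothHom n θ U G) (v w : V n) :
    ∀ x ∈ openCone n θ, ∀ l : ℝ, 0 < l →
      dird v (dird w G) (l • x) = (l * l⁻¹ * l⁻¹) * dird v (dird w G) x :=
  dird_homogeneous (c := fun l => l * l⁻¹) (isOpen_openCone n θ)
    (fun _ hx _ hl => smul_mem_openCone hx hl) (hG.dird_hom w)
    (fun _ hx => ContDiffOn.differentiableAt_of_isOpen hG.isOpen
      (ContDiffOn.dird hG.isOpen hG.contDiffOn w)
      (hG.coneCap_subset (openCone_subset_coneCap hx))) v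

lemma dird_self_dird (hG : SmoothHom n θ U G) (hθ : θ ∈ Ioo 0 (π / 2)) (v : V n) {u : V n}
    (hu : u ∈ sphCap n θ) : dird u (dird v G) u = 0 := by
  have hs := ContDiffOn.dird hG.isOpen hG.contDiffOn v
  have hc : HasDerivAt (fun l : ℝ => l * l⁻¹) 0 1 := by
    refine (hasDerivAt_const (1 : ℝ) (1 : ℝ)).congr_of_eventuallyEq ?_
    filter_upwards [lt_mem_nhds (zero_lt_one' ℝ)] with l hl using mul_inv_cancel₀ hl.ne'
  have := dird_self_of_openCone hθ hG.isOpen hG.coneCap_subset hs (c := 0)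
    (fun x hx => dird_self_of_homogeneous (hG.dird_hom v) hc hx
      (ContDiffOn.differentiableAt_of_isOpen hG.isOpen hs
        (hG.coneCap_subset (openCone_subset_coneCap hx)))) hu
  simpa using this

lemma dird_self_dird_dird (hG : SmoothHom n θ U G) (hθ : θ ∈ Ioo 0 (π / 2)) (v w : V n) {u : V n}
    (hu : u ∈ sphCap n θ) : dird u (dird v (dird w G)) u = -dird v (dird w G) u := by
  have hs := ContDiffOn.dird hG.isOpen (ContDiffOn.dird hG.isOpen hG.contDiffOn w) v
  have hc : HasDerivAt (fun l : ℝ => l * l⁻¹ * l⁻¹) (-1) 1 := by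
    have : HasDerivAt (fun l : ℝ => l⁻¹) (-1) 1 := by
      simpa using hasDerivAt_inv (one_ne_zero (α := ℝ))
    refine this.congr_of_eventuallyEq ?_
    filter_upwards [lt_mem_nhds (zero_lt_one' ℝ)] with l hl
    rw [mul_inv_cancel₀ hl.ne', one_mul]
  have := dird_self_of_openCone hθ hG.isOpen hG.coneCap_subset hs (c := -1)
    (fun x hx => dird_self_of_homogeneous (hG.dird_dird_hom v w) hc hx
      (ContDiffOn.differentiableAt_of_isOpen hG.isOpen hs
        (hG.coneCap_subset (openCone_subset_coneCap hx)))) hu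
  simpa using this

lemma hessQ_eq (hG : SmoothHom n θ U G) {x : V n} (hx : x ∈ U) (v w : V n) :
    hessQ n G x v w = dird v (dird w G) x :=
  fderiv_fderiv_eq_dird hG.isOpen hG.contDiffOn hx v w

lemma hessQ_symm (hG : SmoothHom n θ U G) {x : V n} (hx : x ∈ U) (v w : V n) :
    hessQ n G x v w = hessQ n G x w v :=
  fderiv_fderiv_symm hG.isOpen hG.contDiffOn hx v w

lemma hessQ_self (hG : SmoothHom n θ U G) (hθ : θ ∈ Ioo 0 (π / 2)) {u : V n}
    (hu : u ∈ sphCap n θ) (w : V n) : hessQ n G u u w = 0 := by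
  rw [hG.hessQ_eq (hG.mem hu), hG.dird_self_dird hθ w hu]

end SmoothHom

lemma hessQ_add_left (G : V n → ℝ) (x v w z : V n) :
    hessQ n G x (v + w) z = hessQ n G x v z + hessQ n G x w z := by simp [hessQ]

lemma hessQ_smul_left (G : V n → ℝ) (x v z : V n) (c : ℝ) :
    hessQ n G x (c • v) z = c * hessQ n G x v z := by simp [hessQ]

lemma hessQ_add_right (G : V n → ℝ) (x v w z : V n) :
    hessQ n G x z (v + w) = hessQ n G x z v + hessQ n G x z w := by simp [hessQ]

lemma hessQ_smul_right (G : V n → ℝ) (x v z : V n) (c : ℝ) :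
    hessQ n G x z (c • v) = c * hessQ n G x z v := by simp [hessQ]

/-- Rotating two vectors of an orthonormal basis. -/
lemma exists_rotate_basis {ι : Type*} [Fintype ι] [DecidableEq ι] (b : OrthonormalBasis ι ℝ (V n))
    {p q : ι} (hpq : p ≠ q) (t : ℝ) :
    ∃ c : OrthonormalBasis ι ℝ (V n), c p = circ (b p) (b q) t ∧
      c q = -Real.sin t • b p + Real.cos t • b q ∧ ∀ i, i ≠ p → i ≠ q → c i = b i := by
  have hb := b.orthonormal
  have hin : ∀ i j, ⟪b i, b j⟫ = if i = j then (1 : ℝ) else 0 := orthonormal_iff_ite.1 hb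
  set f : ι → V n := fun i => if i = p then circ (b p) (b q) t else
    if i = q then -Real.sin t • b p + Real.cos t • b q else b i with hf
  have hfp : f p = circ (b p) (b q) t := by simp [hf]
  have hfq : f q = -Real.sin t • b p + Real.cos t • b q := by simp [hf, hpq.symm]
  have hfi : ∀ i, i ≠ p → i ≠ q → f i = b i := fun i h1 h2 => by simp [hf, h1, h2]
  have hort : Orthonormal ℝ f := by
    rw [orthonormal_iff_ite]
    have hcs := Real.sin_sq_add_cos_sq t
    intro i j
    by_cases hip : i = p <;> by_cases hiq : i = q <;> by_cases hjp : j = p <;>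
      by_cases hjq : j = q <;> try (first | (exact absurd (hip.symm.trans hiq) hpq) |
        (exact absurd (hjp.symm.trans hjq) hpq))
    · subst hip; subst hjp
      simp only [hfp, circ, inner_add_left, inner_add_right, inner_smul_left, inner_smul_right, hin]
      simp [hpq, hpq.symm]; linarith
    · subst hip; subst hjq
      simp only [hfp, hfq, circ, inner_add_left, inner_add_right, inner_smul_left,
        inner_smul_right, hin]
      simp [hpq, hpq.symm]; ring
    · subst hip
      rw [hfp, hfi j hjp hjq]
      simp only [circ, inner_add_left, inner_smul_left, hin]
      simp [Ne.symm hjp, Ne.symm hjq]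
    · subst hiq; subst hjp
      simp only [hfp, hfq, circ, inner_add_left, inner_add_right, inner_smul_left,
        inner_smul_right, hin]
      simp [hpq, hpq.symm]; ring
    · subst hiq; subst hjq
      simp only [hfq, inner_add_left, inner_add_right, inner_smul_left, inner_smul_right, hin]
      simp [hpq, hpq.symm]; linarith
    · subst hiq
      rw [hfq, hfi j hjp hjq]
      simp only [inner_add_left, inner_smul_left, hin]
      simp [Ne.symm hjp, Ne.symm hjq]
    · subst hjp
      rw [hfp, hfi i hip hiq]
      simp only [circ, inner_add_right, inner_smul_right, hin]
      simp [hip, hiq]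
    · subst hjq
      rw [hfq, hfi i hip hiq]
      simp only [inner_add_right, inner_smul_right, hin]
      simp [hip, hiq]
    · rw [hfi i hip hiq, hfi j hjp hjq, hin]
  have hspan : Submodule.span ℝ (Set.range f) = ⊤ :=
    hort.linearIndependent.span_eq_top_of_card_eq_finrank'
      (Module.finrank_eq_card_basis b.toBasis).symm
  refine ⟨OrthonormalBasis.mk hort hspan.ge, ?_, ?_, ?_⟩
  · simp [hfp]
  · simp [hfq]
  · intro i h1 h2
    simp [hfi i h1 h2]

end Cap

section Estimates

variable {n j : ℕ} {θ : ℝ} {U W : Set (V n)} {G Φ : V n → ℝ} {m₀ T C : ℝ}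

/-- Bounds on the right-hand side `Φ` and on the first two derivatives of its logarithm. -/
structure LogBounds (n : ℕ) (θ : ℝ) (Φ : V n → ℝ) (W : Set (V n)) (m₀ T C : ℝ) : Prop where
  isOpen : IsOpen W
  mem : ∀ u ∈ sphCap n θ, u ∈ W
  contDiffOn : ContDiffOn ℝ ((⊤ : ℕ∞) : WithTop ℕ∞) (fun x => Real.log (Φ x)) W
  pos : 0 < m₀
  lower : ∀ u ∈ sphCap n θ, m₀ ≤ Φ u
  upper : ∀ u ∈ sphCap n θ, Φ u ≤ T
  one_le : 1 ≤ T
  nonneg : 0 ≤ C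
  grad : ∀ u ∈ sphCap n θ, ∀ e : V n, ‖e‖ = 1 → dird e (fun x => Real.log (Φ x)) u ≤ C
  second : ∀ u ∈ sphCap n θ, ∀ e : V n, ‖e‖ = 1 →
    -(2 * C) ≤ circ2 u e (fun x => Real.log (Φ x))

lemma exists_logBounds {U : Set (V n)} (hU : IsOpen U) (hUc : coneCap n θ ⊆ U)
    (hΦ : ContDiffOn ℝ ((⊤ : ℕ∞) : WithTop ℕ∞) Φ U) (hpos : ∀ u ∈ sphCap n θ, 0 < Φ u) :
    ∃ W m₀ T C, LogBounds n θ Φ W m₀ T C := by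
  have hK := isCompact_sphCap n θ
  have hsub : sphCap n θ ⊆ U := (sphCap_subset_coneCap n θ).trans hUc
  set W : Set (V n) := U ∩ Φ ⁻¹' Ioi 0 with hW
  have hWo : IsOpen W := hΦ.continuousOn.isOpen_inter_preimage hU isOpen_Ioi
  have hmem : ∀ u ∈ sphCap n θ, u ∈ W := fun u hu => ⟨hsub hu, hpos u hu⟩
  set L : V n → ℝ := fun x => Real.log (Φ x) with hL
  have hLs : ContDiffOn ℝ ((⊤ : ℕ∞) : WithTop ℕ∞) L W :=
    (hΦ.mono inter_subset_left).log fun x hx => (ne_of_gt hx.2)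
  have hL1 : ContDiffOn ℝ ((⊤ : ℕ∞) : WithTop ℕ∞) (fderiv ℝ L) W :=
    hLs.fderiv_of_isOpen hWo (by simp)
  have hL2 : ContDiffOn ℝ ((⊤ : ℕ∞) : WithTop ℕ∞) (fderiv ℝ (fderiv ℝ L)) W :=
    hL1.fderiv_of_isOpen hWo (by simp)
  obtain ⟨a, ha⟩ := hK.exists_bound_of_continuousOn (hLs.continuousOn.mono hmem)
  obtain ⟨c, hc⟩ := hK.exists_bound_of_continuousOn (hL1.continuousOn.mono hmem)
  obtain ⟨d, hd⟩ := hK.exists_bound_of_continuousOn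
    (E := V n →L[ℝ] V n →L[ℝ] ℝ) (hL2.continuousOn.mono hmem)
  have hexp : ∀ u ∈ sphCap n θ, Real.exp (L u) = Φ u := fun u hu => Real.exp_log (hpos u hu)
  set C := max 0 (max c d) with hCdef
  have hcC : c ≤ C := (le_max_left _ _).trans (le_max_right _ _)
  have hdC : d ≤ C := (le_max_right _ _).trans (le_max_right _ _)
  refine ⟨W, Real.exp (-a), max 1 (Real.exp a), C, hWo, hmem, hLs, Real.exp_pos _, ?_, ?_,
    le_max_left _ _, le_max_left _ _, ?_, ?_⟩
  · intro u hu
    rw [← hexp u hu]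
    exact Real.exp_le_exp.2 (neg_le_of_abs_le (ha u hu))
  · intro u hu
    rw [← hexp u hu]
    exact (Real.exp_le_exp.2 (le_of_abs_le (ha u hu))).trans (le_max_right _ _)
  · intro u hu e he
    have h1 := (fderiv ℝ L u).le_opNorm e
    rw [he, mul_one] at h1
    exact (le_of_abs_le h1).trans ((hc u hu).trans hcC)
  · intro u hu e he
    have h1 := (fderiv ℝ L u).le_opNorm u
    rw [hu.1, mul_one] at h1
    have h2 : ‖fderiv ℝ (fderiv ℝ L) u e e‖ ≤ ‖fderiv ℝ (fderiv ℝ L) u‖ := by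
      have := (fderiv ℝ (fderiv ℝ L) u).le_opNorm₂ e e
      rwa [he, mul_one, mul_one] at this
    have h3 : dird u L u ≤ C := (le_of_abs_le h1).trans ((hc u hu).trans hcC)
    have h4 : -C ≤ fderiv ℝ (fderiv ℝ L) u e e :=
      neg_le_of_abs_le (h2.trans ((hd u hu).trans hdC))
    rw [fderiv_fderiv_eq_dird hWo hLs (hmem u hu)] at h4
    rw [circ2]
    linarith

variable {ι : Type} [Fintype ι]

/-- Diagonal entries of the Hessian. -/
def eigs (G : V n → ℝ) (u : V n) (b : OrthonormalBasis ι ℝ (V n)) (i : ι) : ℝ :=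
  hessQ n G u (b i) (b i)

/-- Derivatives of `log σ_{j+1}` with respect to the diagonal entries of the Hessian. -/
def wts [DecidableEq ι] (j : ℕ) (G : V n → ℝ) (u : V n) (b : OrthonormalBasis ι ℝ (V n)) (i₀ i : ι) : ℝ :=
  esym j ((Finset.univ.erase i₀).erase i) (eigs G u b) /
    esym (j + 1) (Finset.univ.erase i₀) (eigs G u b)

/-- Second derivatives in the basis directions. -/
def dd (G : V n → ℝ) (b : OrthonormalBasis ι ℝ (V n)) (i : ι) (x : V n) : ℝ :=
  dird (b i) (dird (b i) G) x

/-- A smooth strictly convex solution of `σ_{j+1} = Φ`. -/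
structure IsSolution (n j : ℕ) (θ : ℝ) (U : Set (V n)) (G Φ : V n → ℝ) : Prop
    extends SmoothHom n θ U G where
  angle : θ ∈ Ioo 0 (π / 2)
  tauPos : TauPos n θ G
  le_dim : j + 1 ≤ n
  eq : ∀ u ∈ sphCap n θ, sigmaElem n (j + 1) G u = Φ u

lemma card_eq_of_basis (b : OrthonormalBasis ι ℝ (V n)) : Fintype.card ι = n + 1 := by
  rw [← Module.finrank_eq_card_basis b.toBasis]; simp

lemma card_erase_of_basis [DecidableEq ι] (b : OrthonormalBasis ι ℝ (V n)) (i₀ : ι) :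
    ((Finset.univ : Finset ι).erase i₀).card = n := by
  rw [Finset.card_erase_of_mem (Finset.mem_univ _), Finset.card_univ, card_eq_of_basis b]; rfl

namespace IsSolution

lemma eigs_self (h : IsSolution n j θ U G Φ) {u : V n} (hu : u ∈ sphCap n θ)
    {b : OrthonormalBasis ι ℝ (V n)} {i₀ : ι} (hb : b i₀ = u) : eigs G u b i₀ = 0 := by
  rw [eigs, hb, h.hessQ_self h.angle hu]

lemma eigs_pos [DecidableEq ι] (h : IsSolution n j θ U G Φ) {u : V n} (hu : u ∈ sphCap n θ)
    {b : OrthonormalBasis ι ℝ (V n)} {i₀ : ι} (hb : b i₀ = u) :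
    ∀ i ∈ Finset.univ.erase i₀, 0 < eigs G u b i := by
  intro i hi
  refine h.tauPos.2 u hu (b i) (b.orthonormal.ne_zero i) ?_
  rw [← hb]
  exact b.orthonormal.2 (Finset.ne_of_mem_erase hi)

lemma esym_eigs [DecidableEq ι] (h : IsSolution n j θ U G Φ) {u : V n} (hu : u ∈ sphCap n θ)
    {b : OrthonormalBasis ι ℝ (V n)} {i₀ : ι} (hb : b i₀ = u)
    (hd : ∀ i k, i ≠ k → hessQ n G u (b i) (b k) = 0) :
    esym (j + 1) (Finset.univ.erase i₀) (eigs G u b) = Φ u := by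
  rw [← h.eq u hu, sigmaElem_eq_esym (by have := h.le_dim; omega) b hd]
  exact (esym_eq_erase_of_eq_zero (j + 1) (Finset.mem_univ i₀) (h.eigs_self hu hb)).symm

lemma wts_nonneg [DecidableEq ι] (h : IsSolution n j θ U G Φ) {u : V n} (hu : u ∈ sphCap n θ)
    {b : OrthonormalBasis ι ℝ (V n)} {i₀ : ι} (hb : b i₀ = u) (i : ι) :
    0 ≤ wts j G u b i₀ i :=
  div_nonneg
    (esym_nonneg _ fun k hk => (h.eigs_pos hu hb k (Finset.mem_of_mem_erase hk)).le)
    (esym_nonneg _ fun k hk => (h.eigs_pos hu hb k hk).le)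

/-- Concavity of `log σ_{j+1}`, comparing the Hessians at two points of the cap. -/
lemma tangent_le [DecidableEq ι] (h : IsSolution n j θ U G Φ) (hΦ : ∀ u ∈ sphCap n θ, 0 < Φ u) {u x : V n}
    (hu : u ∈ sphCap n θ) (hx : x ∈ sphCap n θ)
    {b c : OrthonormalBasis ι ℝ (V n)} {i₀ : ι} (hb : b i₀ = u) (hc : c i₀ = x)
    (hd : ∀ i k, i ≠ k → hessQ n G u (b i) (b k) = 0) :
    ((j : ℝ) + 1) + Real.log (Φ x) - Real.log (Φ u) ≤
      ∑ i ∈ Finset.univ.erase i₀, wts j G u b i₀ i * eigs G x c i := by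
  have hcard : j + 1 ≤ ((Finset.univ : Finset ι).erase i₀).card := by
    rw [card_erase_of_basis b]; exact h.le_dim
  have h1 := log_esym_tangent hcard (h.eigs_pos hu hb) (h.eigs_pos hx hc)
  rw [h.esym_eigs hu hb hd] at h1
  have h2 : Φ x ≤ esym (j + 1) (Finset.univ.erase i₀) (eigs G x c) := by
    rw [← h.eq x hx]
    refine (sigmaElem_le_esym (by have := h.le_dim; omega) (h.hessQ_symm (h.mem hx))
      (h.tauPos.1 x hx) c).trans_eq ?_
    exact esym_eq_erase_of_eq_zero (j + 1) (Finset.mem_univ i₀) (h.eigs_self hx hc)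
  have h3 := Real.log_le_log (hΦ x hx) h2
  have h4 : ∀ i, wts j G u b i₀ i =
      esym j ((Finset.univ.erase i₀).erase i) (eigs G u b) / Φ u := by
    intro i; rw [wts, h.esym_eigs hu hb hd]
  simp only [h4]
  linarith

lemma tangent_circ_le [DecidableEq ι] (h : IsSolution n j θ U G Φ) (hΦ : ∀ u ∈ sphCap n θ, 0 < Φ u) {u : V n}
    (hu : u ∈ sphCap n θ) {b : OrthonormalBasis ι ℝ (V n)} {i₀ : ι} (hb : b i₀ = u)
    (hd : ∀ i k, i ≠ k → hessQ n G u (b i) (b k) = 0) {a : ι} (ha : a ∈ Finset.univ.erase i₀)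
    {t : ℝ} (hx : circ u (b a) t ∈ sphCap n θ) :
    ((j : ℝ) + 1) + Real.log (Φ (circ u (b a) t)) - Real.log (Φ u) ≤
      ∑ i ∈ Finset.univ.erase i₀, wts j G u b i₀ i * dd G b i (circ u (b a) t)
        + wts j G u b i₀ a * dd G b i₀ (circ u (b a) t) := by
  have hne : a ≠ i₀ := Finset.ne_of_mem_erase ha
  obtain ⟨c, hc0, hca, hci⟩ := exists_rotate_basis b hne.symm t
  rw [hb] at hc0 hca
  set x := circ u (b a) t with hxdef
  have hxU := h.mem hx
  refine (h.tangent_le hΦ hu hx hb hc0 hd).trans_eq ?_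
  have hdd : ∀ i, dd G b i x = hessQ n G x (b i) (b i) := fun i => (h.hessQ_eq hxU _ _).symm
  have hrot : eigs G x c a = dd G b i₀ x + dd G b a x := by
    have h0 : hessQ n G x (circ u (b a) t) (circ u (b a) t) = 0 := h.hessQ_self h.angle hx _
    have hcs := Real.sin_sq_add_cos_sq t
    rw [eigs, hca, hdd, hdd, hb]
    simp only [circ, hessQ_add_left, hessQ_add_right, hessQ_smul_left, hessQ_smul_right] at h0 ⊢
    linear_combination (hessQ n G x u u + hessQ n G x (b a) (b a)) * hcs - h0
  rw [← Finset.add_sum_erase _ _ ha, ← Finset.add_sum_erase _ (fun i => _ * dd G b i x) ha, hrot]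
  rw [Finset.sum_congr rfl (g := fun i => wts j G u b i₀ i * dd G b i x)]
  · ring
  · intro i hi
    rw [hdd, eigs, hci i (Finset.ne_of_mem_erase (Finset.mem_of_mem_erase hi))
      (Finset.ne_of_mem_erase hi)]

lemma sum_wts_mul_dd [DecidableEq ι] (h : IsSolution n j θ U G Φ) {u : V n}
    (hu : u ∈ sphCap n θ) {b : OrthonormalBasis ι ℝ (V n)} {i₀ : ι} (hb : b i₀ = u) :
    ∑ i ∈ Finset.univ.erase i₀, wts j G u b i₀ i * dd G b i u = j + 1 := by
  have hcard : j + 1 ≤ ((Finset.univ : Finset ι).erase i₀).card := by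
    rw [card_erase_of_basis b]; exact h.le_dim
  rw [← sum_esym_erase_div_mul hcard (h.eigs_pos hu hb)]
  refine Finset.sum_congr rfl fun i _ => ?_
  rw [wts, eigs, dd, h.hessQ_eq (h.mem hu)]

lemma sigmaElem_one [DecidableEq ι] (h : IsSolution n j θ U G Φ) {x : V n} (hx : x ∈ U)
    (b : OrthonormalBasis ι ℝ (V n)) (i₀ : ι) :
    sigmaElem n 1 G x = ∑ i ∈ Finset.univ.erase i₀, dd G b i x + dd G b i₀ x := by
  rw [sigmaElem_one_eq_sum G x b, ← Finset.sum_erase_add _ _ (Finset.mem_univ i₀)]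
  simp only [dd, h.hessQ_eq hx]

lemma contDiffOn_dd (h : IsSolution n j θ U G Φ) (b : OrthonormalBasis ι ℝ (V n)) (i : ι) :
    ContDiffOn ℝ ((⊤ : ℕ∞) : WithTop ℕ∞) (dd G b i) U :=
  ContDiffOn.dird h.isOpen (ContDiffOn.dird h.isOpen h.contDiffOn _) _

lemma dd_self (h : IsSolution n j θ U G Φ) {u : V n}
    (hu : u ∈ sphCap n θ) {b : OrthonormalBasis ι ℝ (V n)} {i₀ : ι} (hb : b i₀ = u) :
    dd G b i₀ u = 0 := by
  rw [dd, ← h.hessQ_eq (h.mem hu)]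
  exact h.eigs_self hu hb

end IsSolution

end Estimates

section Maximum

variable {n j : ℕ} {θ : ℝ} {U W : Set (V n)} {G Φ : V n → ℝ} {m₀ T C B : ℝ}

lemma norm_circ {u e : V n} (hu : ‖u‖ = 1) (he : ‖e‖ = 1) (hue : ⟪u, e⟫ = 0) (t : ℝ) :
    ‖circ u e t‖ = 1 := by
  have h : ‖circ u e t‖ ^ 2 = 1 := by
    rw [circ, norm_add_sq_real, norm_smul, norm_smul, inner_smul_left, inner_smul_right, hu, he,
      hue]
    simp [sq_abs]
  exact (pow_eq_one_iff_of_nonneg (norm_nonneg _) two_ne_zero).1 h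

lemma hasSecondDeriv_circ_last (u e : V n) :
    HasSecondDeriv (fun t => circ u e t (Fin.last n)) (-u (Fin.last n)) := by
  refine ⟨fun t => -Real.sin t * u (Fin.last n) + Real.cos t * e (Fin.last n),
    Eventually.of_forall fun t => ?_, ?_⟩
  · exact ((Real.hasDerivAt_cos t).mul_const _).add ((Real.hasDerivAt_sin t).mul_const _)
  · refine (((Real.hasDerivAt_sin 0).neg.mul_const _).add
      ((Real.hasDerivAt_cos 0).mul_const _)).congr_deriv ?_
    simp

lemma inner_basis_eq_zero {ι : Type} [Fintype ι] (b : OrthonormalBasis ι ℝ (V n)) {i k : ι}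
    (hik : i ≠ k) : ⟪b i, b k⟫ = 0 := b.orthonormal.2 hik

namespace IsSolution

variable {ι : Type} [Fintype ι]

/-- Commutation of second covariant derivatives on the sphere. -/
lemma circ2_dd_sub (h : IsSolution n j θ U G Φ) {u : V n} (hu : u ∈ sphCap n θ)
    (b : OrthonormalBasis ι ℝ (V n)) (a i : ι) :
    circ2 u (b a) (dd G b i) - circ2 u (b i) (dd G b a) = eigs G u b i - eigs G u b a := by
  have hU := h.isOpen
  have huU := h.mem hu
  have hs := h.contDiffOn
  have hs1 : ∀ v, ContDiffOn ℝ ((⊤ : ℕ∞) : WithTop ℕ∞) (dird v G) U := ContDiffOn.dird hU hs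
  have hs2 : ∀ v w, ContDiffOn ℝ ((⊤ : ℕ∞) : WithTop ℕ∞) (dird v (dird w G)) U :=
    fun v w => ContDiffOn.dird hU (hs1 w) v
  have c3 : ∀ p q : V n, ∀ x ∈ U, dird p (dird q (dird q G)) x = dird q (dird q (dird p G)) x := by
    intro p q x hx
    rw [dird_comm hU (hs1 q) hx]
    exact dird_congr hU (fun y hy => dird_comm hU hs hy p q) hx q
  have c4 : dird (b a) (dird (b a) (dd G b i)) u = dird (b i) (dird (b i) (dd G b a)) u := by
    have e1 : dird (b a) (dird (b a) (dd G b i)) u =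
        dird (b a) (dird (b i) (dird (b i) (dird (b a) G))) u :=
      dird_congr hU (fun y hy => c3 (b a) (b i) y hy) huU _
    rw [e1, dird_comm hU (hs2 _ _) huU]
    refine dird_congr hU (fun y hy => ?_) huU _
    exact dird_comm hU (hs1 (b a)) hy _ _
  have e : ∀ k, dird u (dd G b k) u = -eigs G u b k := by
    intro k
    rw [eigs, h.hessQ_eq huU]
    exact h.dird_self_dird_dird h.angle _ _ hu
  rw [circ2, circ2, c4, e, e]
  ring

lemma second_tangent [DecidableEq ι] (h : IsSolution n j θ U G Φ) (hL : LogBounds n θ Φ W m₀ T C) {u : V n}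
    (hu : u ∈ sphCap n θ) {b : OrthonormalBasis ι ℝ (V n)} {i₀ : ι} (hb : b i₀ = u)
    (hd : ∀ i k, i ≠ k → hessQ n G u (b i) (b k) = 0) {a : ι} (ha : a ∈ Finset.univ.erase i₀)
    (hcap : ∀ᶠ t in 𝓝 (0 : ℝ), circ u (b a) t ∈ sphCap n θ) :
    -(2 * C) ≤ ∑ i ∈ Finset.univ.erase i₀, wts j G u b i₀ i * circ2 u (b a) (dd G b i)
      + wts j G u b i₀ a * circ2 u (b a) (dd G b i₀) := by
  have hdd := fun i => hasSecondDeriv_comp_circ h.isOpen (h.contDiffOn_dd b i) (h.mem hu) (b a)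
  have hlog := hasSecondDeriv_comp_circ hL.isOpen hL.contDiffOn (hL.mem u hu) (b a)
  have hsum := ((hasSecondDeriv_sum (Finset.univ.erase i₀)
    fun i _ => (hdd i).const_mul (wts j G u b i₀ i)).add
    ((hdd i₀).const_mul (wts j G u b i₀ a))).add (hlog.const_mul (-1))
  have hmin := hsum.nonneg_of_isLocalMin (by
    filter_upwards [hcap] with t ht
    have h1 := h.tangent_circ_le (fun x hx => hL.pos.trans_le (hL.lower x hx)) hu hb hd ha ht
    rw [circ_zero, h.sum_wts_mul_dd hu hb, h.dd_self hu hb]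
    linarith)
  have := hL.second u hu (b a) (b.orthonormal.1 a)
  linarith

lemma second_max [DecidableEq ι] (h : IsSolution n j θ U G Φ) {u : V n}
    (hu : u ∈ sphCap n θ)
    (hmax : ∀ x ∈ sphCap n θ, sigmaElem n 1 G x + B * x (Fin.last n) ≤
      sigmaElem n 1 G u + B * u (Fin.last n))
    (b : OrthonormalBasis ι ℝ (V n)) (i₀ a : ι)
    (hcap : ∀ᶠ t in 𝓝 (0 : ℝ), circ u (b a) t ∈ sphCap n θ) :
    ∑ i ∈ Finset.univ.erase i₀, circ2 u (b a) (dd G b i) + circ2 u (b a) (dd G b i₀)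
      ≤ B * u (Fin.last n) := by
  have hdd := fun i => hasSecondDeriv_comp_circ h.isOpen (h.contDiffOn_dd b i) (h.mem hu) (b a)
  have hsum := (((hasSecondDeriv_sum (Finset.univ.erase i₀) fun i _ => hdd i).add
    (hdd i₀)).add ((hasSecondDeriv_circ_last u (b a)).const_mul B)).const_mul (-1)
  have hmin := hsum.nonneg_of_isLocalMin (by
    filter_upwards [hcap] with t ht
    have h1 := hmax _ ht
    rw [h.sigmaElem_one (h.mem ht) b i₀, h.sigmaElem_one (h.mem hu) b i₀] at h1
    simp only [circ_zero]
    linarith)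
  linarith

lemma trace_le_of_interior_max (h : IsSolution n j θ U G Φ) (hL : LogBounds n θ Φ W m₀ T C)
    (hB : 0 ≤ B) {u : V n} (hu : u ∈ sphCap n θ) (hlast : Real.cos θ < u (Fin.last n))
    (hmax : ∀ x ∈ sphCap n θ, sigmaElem n 1 G x + B * x (Fin.last n) ≤
      sigmaElem n 1 G u + B * u (Fin.last n)) :
    sigmaElem n 1 G u ≤ B + n * (j + 1 + 2 * C) * T / (j + 1) := by
  obtain ⟨d, b, hbv, hbd⟩ := exists_diagonalizing_basis (fderiv ℝ (fderiv ℝ G) u)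
    (h.hessQ_symm (h.mem hu)) (v := fun _ : Fin 1 => u)
    ⟨fun _ => hu.1, fun i k hik => absurd (Subsingleton.elim i k) hik⟩
    (fun i k hik => absurd (Subsingleton.elim i k) hik)
    (fun _ w _ => h.hessQ_self h.angle hu w)
  set i₀ : Fin 1 ⊕ Fin d := Sum.inl 0 with hi₀
  have hb : b i₀ = u := hbv 0
  set S : Finset (Fin 1 ⊕ Fin d) := Finset.univ.erase i₀ with hS
  have hcardS : S.card = n := card_erase_of_basis b i₀
  have hcap : ∀ a ∈ S, ∀ᶠ t in 𝓝 (0 : ℝ), circ u (b a) t ∈ sphCap n θ := by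
    intro a ha
    have hc : Continuous fun t => circ u (b a) t (Fin.last n) := by
      have := continuous_circ u (b a)
      fun_prop
    have : ∀ᶠ t in 𝓝 (0 : ℝ), Real.cos θ < circ u (b a) t (Fin.last n) :=
      hc.continuousAt.eventually_const_lt (by simpa [circ_zero] using hlast)
    filter_upwards [this] with t ht
    refine ⟨norm_circ hu.1 (b.orthonormal.1 a) ?_ t, ht.le⟩
    rw [← hb]
    exact inner_basis_eq_zero b (Finset.ne_of_mem_erase ha).symm
  have hlast1 : u (Fin.last n) ≤ 1 := by
    rw [← inner_Etop]
    refine (real_inner_le_norm _ _).trans ?_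
    rw [hu.1, norm_Etop, one_mul]
  have hmain := trace_mul_sum_le (S := S) (p := wts j G u b i₀) (l := fun i => dd G b i u)
    (q := fun a => circ2 u (b a) (dd G b i₀)) (M := fun a i => circ2 u (b a) (dd G b i))
    (B := B) (C := 2 * C) (fun a _ => h.wts_nonneg hu hb a)
    (fun a _ i _ => by
      rw [h.circ2_dd_sub hu b a i, eigs, eigs, h.hessQ_eq (h.mem hu), h.hessQ_eq (h.mem hu)]; rfl)
    (fun a ha => h.second_tangent hL hu hb hbd ha (hcap a ha))
    (fun a ha => (h.second_max hu hmax b i₀ a (hcap a ha)).trans (by nlinarith))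
  rw [h.sum_wts_mul_dd hu hb, hcardS] at hmain
  have hH : sigmaElem n 1 G u = ∑ i ∈ S, dd G b i u := by
    rw [h.sigmaElem_one (h.mem hu) b i₀, h.dd_self hu hb, add_zero]
  rw [← hH] at hmain
  have hP : ((j : ℝ) + 1) / T ≤ ∑ i ∈ S, wts j G u b i₀ i := by
    refine le_sum_esym_erase_div (hcardS ▸ h.le_dim) (h.eigs_pos hu hb) hL.one_le ?_
    rw [h.esym_eigs hu hb hbd]
    exact hL.upper u hu
  have hT0 : 0 < T := by linarith [hL.one_le]
  have hC := hL.nonneg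
  by_contra! hlt
  have hgt : 0 < sigmaElem n 1 G u - B := by
    have : 0 ≤ n * (j + 1 + 2 * C) * T / (j + 1) := by positivity
    linarith
  have h1 : (sigmaElem n 1 G u - B) * (((j : ℝ) + 1) / T) ≤ n * (j + 1 + 2 * C) :=
    (mul_le_mul_of_nonneg_left hP hgt.le).trans (by linarith)
  have h2 : n * (j + 1 + 2 * C) * T / (j + 1) * (((j : ℝ) + 1) / T) = n * (j + 1 + 2 * C) := by
    field_simp
  have h3 : n * (j + 1 + 2 * C) * T / (j + 1) * (((j : ℝ) + 1) / T) <
      (sigmaElem n 1 G u - B) * (((j : ℝ) + 1) / T) :=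
    mul_lt_mul_of_pos_right (by linarith) (by positivity)
  linarith

end IsSolution

end Maximum

section Boundary

variable {n j : ℕ} {θ : ℝ} {U W : Set (V n)} {G Φ : V n → ℝ} {m₀ T C B : ℝ}

lemma HasSecondDeriv.eq_zero_of_forall_eq_zero {h : ℝ → ℝ} {c : ℝ} (hh : HasSecondDeriv h c)
    (h0 : ∀ t, h t = 0) : c = 0 := by
  have h1 := hh.nonneg_of_isLocalMin (Eventually.of_forall fun t => by rw [h0, h0])
  have h2 := (hh.const_mul (-1)).nonneg_of_isLocalMin
    (Eventually.of_forall fun t => by simp [h0])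
  linarith

lemma dird_comp_const_add {E : Type*} [NormedAddCommGroup E] [NormedSpace ℝ E] (a v : E)
    (f : E → ℝ) (x : E) : dird v (fun y => f (a + y)) x = dird v f (a + x) := by
  rw [dird, dird, fderiv_comp_add_left]

/-- The unit conormal of the cap at a boundary point. -/
def conormal (n : ℕ) (θ : ℝ) (u : V n) : V n :=
  (Real.sin θ)⁻¹ • (Real.cos θ • u - Etop n)

lemma sin_angle_pos (hθ : θ ∈ Ioo 0 (π / 2)) : 0 < Real.sin θ :=
  Real.sin_pos_of_pos_of_lt_pi hθ.1 (by linarith [hθ.2, Real.pi_pos])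

lemma cos_angle_pos (hθ : θ ∈ Ioo 0 (π / 2)) : 0 < Real.cos θ :=
  Real.cos_pos_of_mem_Ioo ⟨by linarith [hθ.1, hθ.2], hθ.2⟩

lemma Etop_eq_conormal (hθ : θ ∈ Ioo 0 (π / 2)) (u : V n) :
    Etop n = Real.cos θ • u + (-Real.sin θ) • conormal n θ u := by
  rw [conormal, smul_smul, neg_mul, mul_inv_cancel₀ (sin_angle_pos hθ).ne']
  simp

lemma inner_conormal {u : V n} (hu : u ∈ sphCapBdry n θ) : ⟪u, conormal n θ u⟫ = 0 := by
  rw [conormal, inner_smul_right, inner_sub_right, inner_smul_right, inner_Etop,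
    real_inner_self_eq_norm_sq, hu.1, hu.2]
  simp

lemma conormal_last (hθ : θ ∈ Ioo 0 (π / 2)) {u : V n} (hu : u ∈ sphCapBdry n θ) :
    conormal n θ u (Fin.last n) = -Real.sin θ := by
  have hs := (sin_angle_pos hθ).ne'
  change (Real.sin θ)⁻¹ * (Real.cos θ * u (Fin.last n) - Etop n (Fin.last n)) = _
  rw [Etop_last, hu.2]
  have := Real.sin_sq_add_cos_sq θ
  field_simp
  linarith

lemma norm_conormal (hθ : θ ∈ Ioo 0 (π / 2)) {u : V n} (hu : u ∈ sphCapBdry n θ) :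
    ‖conormal n θ u‖ = 1 := by
  have hs := (sin_angle_pos hθ).ne'
  refine (pow_eq_one_iff_of_nonneg (norm_nonneg _) two_ne_zero).1 ?_
  have h1 : ‖Real.cos θ • u - Etop n‖ ^ 2 = Real.sin θ ^ 2 := by
    rw [norm_sub_sq_real, norm_smul, inner_smul_left, inner_Etop, hu.1, hu.2, norm_Etop]
    have := Real.sin_sq_add_cos_sq θ
    simp [sq_abs]
    linarith
  rw [conormal, norm_smul, mul_pow, h1, norm_inv, inv_pow, Real.norm_eq_abs, sq_abs]
  field_simp

lemma bdry_subset {u : V n} (hu : u ∈ sphCapBdry n θ) : u ∈ sphCap n θ := ⟨hu.1, hu.2.ge⟩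

/-- The parallel circle of the cap boundary through `u` with direction `e`. -/
lemma parallel_mem_bdry {u e : V n} (hu : u ∈ sphCapBdry n θ)
    (he : ‖e‖ = 1) (hue : ⟪u, e⟫ = 0) (hEe : e (Fin.last n) = 0) (t : ℝ) :
    Real.cos θ • Etop n + circ (u - Real.cos θ • Etop n) (Real.sin θ • e) t ∈
      sphCapBdry n θ := by
  have hsc := Real.sin_sq_add_cos_sq θ
  have hw : ‖u - Real.cos θ • Etop n‖ ^ 2 = Real.sin θ ^ 2 := by
    rw [norm_sub_sq_real, norm_smul, inner_smul_right, inner_Etop, hu.1, hu.2, norm_Etop]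
    simp [sq_abs]
    linarith
  have hwl : (u - Real.cos θ • Etop n) (Fin.last n) = 0 := by
    simp [Etop_last, hu.2]
  have hEe' : ⟪Etop n, e⟫ = 0 := by rw [real_inner_comm, inner_Etop, hEe]
  have hwe : ⟪u - Real.cos θ • Etop n, e⟫ = 0 := by
    rw [inner_sub_left, inner_smul_left, hue, hEe']
    simp
  set w := u - Real.cos θ • Etop n with hwdef
  have hlast : circ w (Real.sin θ • e) t (Fin.last n) = 0 := by
    change Real.cos t * w (Fin.last n) + Real.sin t * (Real.sin θ * e (Fin.last n)) = 0
    rw [hwl, hEe]; ring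
  have hnorm : ‖circ w (Real.sin θ • e) t‖ ^ 2 = Real.sin θ ^ 2 := by
    rw [circ, norm_add_sq_real, norm_smul, norm_smul, norm_smul, inner_smul_left,
      inner_smul_right, inner_smul_right, hwe, he, mul_pow, hw]
    have := Real.sin_sq_add_cos_sq t
    simp only [Real.norm_eq_abs, mul_pow, sq_abs]
    linear_combination Real.sin θ ^ 2 * this
  constructor
  · refine (pow_eq_one_iff_of_nonneg (norm_nonneg _) two_ne_zero).1 ?_
    rw [norm_add_sq_real, norm_smul, norm_Etop, inner_smul_left, real_inner_comm, inner_Etop,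
      hlast, hnorm]
    simp [sq_abs]
  · change Real.cos θ * Etop n (Fin.last n) + circ w (Real.sin θ • e) t (Fin.last n) = _
    rw [hlast, Etop_last]; ring

namespace IsSolution

/-- First tangential derivative of the capillary condition. -/
lemma dird_dird_Etop (h : IsSolution n j θ U G Φ) (hcap : IsCapillaryF n θ G) {u e : V n}
    (hu : u ∈ sphCapBdry n θ) (he : ‖e‖ = 1) (hue : ⟪u, e⟫ = 0) (hEe : e (Fin.last n) = 0) :
    dird e (dird (Etop n) G) u = 0 := by
  have huU := h.mem (bdry_subset hu)
  set a := Real.cos θ • Etop n with ha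
  have hs := ContDiffOn.dird h.isOpen h.contDiffOn (Etop n)
  have hdiff : DifferentiableAt ℝ (fun y => dird (Etop n) G (a + y)) (u - a) := by
    have h1 : DifferentiableAt ℝ (dird (Etop n) G) (a + (u - a)) := by
      rw [add_sub_cancel]
      exact ContDiffOn.differentiableAt_of_isOpen h.isOpen hs huU
    exact h1.comp (u - a) ((differentiableAt_const a).add differentiableAt_id)
  have h1 := hasDerivAt_comp_circ_zero (Real.sin θ • e) hdiff
  have h2 : (fun t => dird (Etop n) G (a + circ (u - a) (Real.sin θ • e) t)) = fun _ => 0 := by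
    funext t
    exact hcap _ (parallel_mem_bdry hu he hue hEe t)
  rw [h2] at h1
  have h3 := h1.unique (hasDerivAt_const 0 (0 : ℝ))
  rw [dird_comp_const_add, add_sub_cancel, dird_smul_vec] at h3
  exact (mul_eq_zero.1 h3).resolve_left (sin_angle_pos h.angle).ne'

/-- Second tangential derivative of the capillary condition. -/
lemma sin_sq_mul_dird (h : IsSolution n j θ U G Φ) (hcap : IsCapillaryF n θ G) {u e : V n}
    (hu : u ∈ sphCapBdry n θ) (he : ‖e‖ = 1) (hue : ⟪u, e⟫ = 0) (hEe : e (Fin.last n) = 0) :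
    Real.sin θ ^ 2 * dird e (dird e (dird (Etop n) G)) u =
      dird (u - Real.cos θ • Etop n) (dird (Etop n) G) u := by
  have huU := h.mem (bdry_subset hu)
  set a := Real.cos θ • Etop n with ha
  have hs := ContDiffOn.dird h.isOpen h.contDiffOn (Etop n)
  have hmap : Continuous fun y : V n => a + y := by fun_prop
  have hU' : IsOpen ((fun y : V n => a + y) ⁻¹' U) := h.isOpen.preimage hmap
  have hs' : ContDiffOn ℝ ((⊤ : ℕ∞) : WithTop ℕ∞) (fun y => dird (Etop n) G (a + y))
      ((fun y : V n => a + y) ⁻¹' U) :=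
    hs.comp (contDiffOn_const.add contDiffOn_id) fun y hy => hy
  have hu' : u - a ∈ (fun y : V n => a + y) ⁻¹' U := by
    change a + (u - a) ∈ U
    rwa [add_sub_cancel]
  have h1 := (hasSecondDeriv_comp_circ hU' hs' hu' (Real.sin θ • e)).eq_zero_of_forall_eq_zero
    fun t => hcap _ (parallel_mem_bdry hu he hue hEe t)
  rw [circ2, dird_comp_const_add, add_sub_cancel] at h1
  have h2 : (dird (Real.sin θ • e) fun y => dird (Etop n) G (a + y)) =
      fun y => Real.sin θ * dird e (dird (Etop n) G) (a + y) := by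
    funext y
    rw [dird_comp_const_add, dird_smul_vec]
  have h3 : dird (Real.sin θ • e) (fun y => Real.sin θ * dird e (dird (Etop n) G) (a + y)) (u - a)
      = Real.sin θ ^ 2 * dird e (dird e (dird (Etop n) G)) u := by
    have hd : DifferentiableAt ℝ (fun y => dird e (dird (Etop n) G) (a + y)) (u - a) := by
      have h1 : DifferentiableAt ℝ (dird e (dird (Etop n) G)) (a + (u - a)) := by
        rw [add_sub_cancel]
        exact ContDiffOn.differentiableAt_of_isOpen h.isOpen (ContDiffOn.dird h.isOpen hs e) huU
      exact h1.comp (u - a) ((differentiableAt_const a).add differentiableAt_id)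
    have h4 := dird_comp_const_add a e (dird e (dird (Etop n) G)) (u - a)
    rw [add_sub_cancel] at h4
    rw [← h4, dird_smul_vec, dird, fderiv_const_mul hd]
    simp [dird]
    ring
  rw [h2, h3] at h1
  linarith

/-- The conormal is a principal direction along the boundary. -/
lemma hessQ_conormal (h : IsSolution n j θ U G Φ) (hcap : IsCapillaryF n θ G) {u w : V n}
    (hu : u ∈ sphCapBdry n θ) (hw : ⟪u, w⟫ = 0) (hmw : ⟪conormal n θ u, w⟫ = 0) :
    hessQ n G u (conormal n θ u) w = 0 := by
  have huU := h.mem (bdry_subset hu)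
  rcases eq_or_ne w 0 with rfl | hw0
  · simp [hessQ]
  have hn : ‖w‖ ≠ 0 := norm_ne_zero_iff.2 hw0
  have hEw : ⟪w, Etop n⟫ = 0 := by
    rw [Etop_eq_conormal h.angle u, inner_add_right, inner_smul_right, inner_smul_right,
      real_inner_comm, hw, real_inner_comm, hmw]
    simp
  set e := ‖w‖⁻¹ • w with he
  have h1 := h.dird_dird_Etop hcap hu (e := e)
    (by rw [he, norm_smul, norm_inv, norm_norm, inv_mul_cancel₀ hn])
    (by rw [he, inner_smul_right, hw, mul_zero])
    (by rw [← inner_Etop, he, inner_smul_left, hEw, mul_zero])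
  rw [he, dird_smul_vec, ← h.hessQ_eq huU, h.hessQ_symm huU, Etop_eq_conormal h.angle u,
    hessQ_add_left, hessQ_smul_left, hessQ_smul_left, h.hessQ_self h.angle (bdry_subset hu)] at h1
  have h2 : ‖w‖⁻¹ ≠ 0 := inv_ne_zero hn
  have h3 := (mul_eq_zero.1 h1).resolve_left h2
  have h4 : -Real.sin θ ≠ 0 := neg_ne_zero.2 (sin_angle_pos h.angle).ne'
  rw [mul_zero, zero_add] at h3
  exact (mul_eq_zero.1 h3).resolve_left h4

/-- Conormal derivative of the tangential second derivatives at the boundary. -/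
lemma sin_mul_dird_conormal (h : IsSolution n j θ U G Φ) (hcap : IsCapillaryF n θ G) {u e : V n}
    (hu : u ∈ sphCapBdry n θ) (he : ‖e‖ = 1) (hue : ⟪u, e⟫ = 0)
    (hme : ⟪conormal n θ u, e⟫ = 0) :
    Real.sin θ * dird (conormal n θ u) (dird e (dird e G)) u =
      Real.cos θ * (hessQ n G u (conormal n θ u) (conormal n θ u) - hessQ n G u e e) := by
  have huc := bdry_subset hu
  have huU := h.mem huc
  have hsin := sin_angle_pos h.angle
  have hs1 := ContDiffOn.dird h.isOpen h.contDiffOn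
  have hEe : e (Fin.last n) = 0 := by
    rw [← inner_Etop, Etop_eq_conormal h.angle u, inner_add_right, inner_smul_right,
      inner_smul_right, real_inner_comm, hue, real_inner_comm, hme]
    simp
  have h1 := h.sin_sq_mul_dird hcap hu he hue hEe
  have hz : ∀ w, hessQ n G u u w = 0 := h.hessQ_self h.angle huc
  have hz' : ∀ w, hessQ n G u w u = 0 := fun w => by rw [h.hessQ_symm huU, hz]
  have hEE : hessQ n G u (Etop n) (Etop n) =
      Real.sin θ ^ 2 * hessQ n G u (conormal n θ u) (conormal n θ u) := by
    rw [Etop_eq_conormal h.angle u]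
    generalize conormal n θ u = μ at hz hz' ⊢
    rw [hessQ_add_left, hessQ_smul_left, hessQ_smul_left, hz, hessQ_add_right,
      hessQ_smul_right, hessQ_smul_right, hz']
    ring
  rw [dird_sub_vec, dird_smul_vec, h.dird_self_dird h.angle _ huc, ← h.hessQ_eq huU, hEE] at h1
  have h2 : dird e (dird e (dird (Etop n) G)) u = dird (Etop n) (dird e (dird e G)) u := by
    rw [dird_comm h.isOpen (hs1 e) huU]
    exact dird_congr h.isOpen (fun y hy => dird_comm h.isOpen h.contDiffOn hy _ _) huU _
  have h3 : dird (Etop n) (dird e (dird e G)) u =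
      -(Real.cos θ * hessQ n G u e e)
        - Real.sin θ * dird (conormal n θ u) (dird e (dird e G)) u := by
    have := h.dird_self_dird_dird h.angle e e huc
    rw [Etop_eq_conormal h.angle u, dird_add_vec, dird_smul_vec, dird_smul_vec, this,
      h.hessQ_eq huU e e]
    ring
  rw [h2, h3] at h1
  have h5 : Real.sin θ ^ 2 ≠ 0 := by positivity
  refine mul_left_cancel₀ h5 ?_
  linear_combination -h1

end IsSolution

end Boundary

section BoundaryMaximum

variable {n j : ℕ} {θ : ℝ} {U W : Set (V n)} {G Φ : V n → ℝ} {m₀ T C B : ℝ}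

lemma hasDerivAt_comp_circ_neg {f : V n → ℝ} {u : V n} (e : V n) (hf : DifferentiableAt ℝ f u) :
    HasDerivAt (fun s => f (circ u e (-s))) (-dird e f u) 0 := by
  have h1 : HasDerivAt (fun s => f (circ u e s)) (dird e f u) (-(0 : ℝ)) := by
    rw [neg_zero]; exact hasDerivAt_comp_circ_zero e hf
  refine (h1.comp (0 : ℝ) (hasDerivAt_neg 0)).congr_deriv ?_
  ring

lemma circ_conormal_neg_mem (hθ : θ ∈ Ioo 0 (π / 2)) {u : V n} (hu : u ∈ sphCapBdry n θ) :
    ∀ᶠ t in 𝓝[>] (0 : ℝ), circ u (conormal n θ u) (-t) ∈ sphCap n θ := by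
  filter_upwards [Ioo_mem_nhdsGT hθ.1] with t ht
  refine ⟨norm_circ hu.1 (norm_conormal hθ hu) (inner_conormal hu) _, ?_⟩
  change _ ≤ Real.cos (-t) * u (Fin.last n) + Real.sin (-t) * conormal n θ u (Fin.last n)
  rw [conormal_last hθ hu, hu.2]
  have h1 : Real.cos (-t) * Real.cos θ + Real.sin (-t) * -Real.sin θ = Real.cos (θ - t) := by
    rw [Real.cos_sub, Real.cos_neg, Real.sin_neg]; ring
  rw [h1]
  exact Real.cos_le_cos_of_nonneg_of_le_pi (by linarith [ht.2])
    (by linarith [hθ.2, Real.pi_pos]) (by linarith [ht.1])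

namespace IsSolution

variable {ι : Type} [Fintype ι] [DecidableEq ι]

lemma first_tangent (h : IsSolution n j θ U G Φ) (hL : LogBounds n θ Φ W m₀ T C) {u : V n}
    (hu : u ∈ sphCapBdry n θ) {b : OrthonormalBasis ι ℝ (V n)} {i₀ m : ι} (hb : b i₀ = u)
    (hm : b m = conormal n θ u) (hd : ∀ i k, i ≠ k → hessQ n G u (b i) (b k) = 0)
    (hmS : m ∈ Finset.univ.erase i₀) :
    ∑ i ∈ Finset.univ.erase i₀, wts j G u b i₀ i * dird (conormal n θ u) (dd G b i) u
      + wts j G u b i₀ m * dird (conormal n θ u) (dd G b i₀) u ≤ C := by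
  have huc := bdry_subset hu
  have hdd := fun i => hasDerivAt_comp_circ_neg (conormal n θ u)
    (ContDiffOn.differentiableAt_of_isOpen h.isOpen (h.contDiffOn_dd b i) (h.mem huc))
  have hlog := hasDerivAt_comp_circ_neg (conormal n θ u)
    (ContDiffOn.differentiableAt_of_isOpen hL.isOpen hL.contDiffOn (hL.mem u huc))
  have hsum := (((HasDerivAt.fun_sum (u := Finset.univ.erase i₀)
    fun i _ => (hdd i).const_mul (wts j G u b i₀ i)).fun_add
    ((hdd i₀).const_mul (wts j G u b i₀ m))).fun_sub hlog).sub_const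
      ((j : ℝ) + 1 - Real.log (Φ u))
  have hnn := deriv_nonneg_of_nonneg_right hsum
    (by
      simp only [neg_zero, circ_zero]
      rw [h.sum_wts_mul_dd huc hb, h.dd_self huc hb]
      ring)
    (by
      filter_upwards [circ_conormal_neg_mem h.angle hu] with t ht
      rw [← hm] at ht
      have h1 := h.tangent_circ_le (fun x hx => hL.pos.trans_le (hL.lower x hx)) huc hb hd hmS ht
      rw [hm] at h1
      linarith)
  have := hL.grad u huc _ (norm_conormal h.angle hu)
  simp only [mul_neg, Finset.sum_neg_distrib] at hnn
  linarith

lemma first_max (h : IsSolution n j θ U G Φ) {u : V n} (hu : u ∈ sphCapBdry n θ)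
    (hmax : ∀ x ∈ sphCap n θ, sigmaElem n 1 G x + B * x (Fin.last n) ≤
      sigmaElem n 1 G u + B * u (Fin.last n))
    (b : OrthonormalBasis ι ℝ (V n)) (i₀ : ι) :
    B * Real.sin θ ≤ ∑ i ∈ Finset.univ.erase i₀, dird (conormal n θ u) (dd G b i) u
      + dird (conormal n θ u) (dd G b i₀) u := by
  have huc := bdry_subset hu
  have hdd := fun i => hasDerivAt_comp_circ_neg (conormal n θ u)
    (ContDiffOn.differentiableAt_of_isOpen h.isOpen (h.contDiffOn_dd b i) (h.mem huc))
  have hlast : HasDerivAt (fun t => circ u (conormal n θ u) (-t) (Fin.last n)) (Real.sin θ) 0 := by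
    have hcl : ∀ t, circ u (conormal n θ u) (-t) (Fin.last n) =
        Real.cos t * Real.cos θ + Real.sin t * Real.sin θ := by
      intro t
      change Real.cos (-t) * u (Fin.last n) + Real.sin (-t) * conormal n θ u (Fin.last n) = _
      rw [conormal_last h.angle hu, hu.2, Real.cos_neg, Real.sin_neg]
      ring
    simp only [hcl]
    refine (((Real.hasDerivAt_cos 0).mul_const _).fun_add
      ((Real.hasDerivAt_sin 0).mul_const _)).congr_deriv ?_
    simp
  have hsum := (((HasDerivAt.fun_sum (u := Finset.univ.erase i₀) fun i _ => hdd i).fun_add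
    (hdd i₀)).fun_add (hlast.const_mul B)).const_sub
      (sigmaElem n 1 G u + B * u (Fin.last n))
  have hnn := deriv_nonneg_of_nonneg_right hsum
    (by
      simp only [neg_zero, circ_zero]
      rw [h.sigmaElem_one (h.mem huc) b i₀]
      ring)
    (by
      filter_upwards [circ_conormal_neg_mem h.angle hu] with t ht
      have h1 := hmax _ ht
      rw [h.sigmaElem_one (h.mem ht) b i₀] at h1
      linarith)
  simp only [Finset.sum_neg_distrib] at hnn
  linarith

end IsSolution

/-- At a boundary maximum of the test function the slope `B` is controlled. -/
lemma exists_boundary_const (hθ : θ ∈ Ioo 0 (π / 2)) (j : ℕ) (hL : LogBounds n θ Φ W m₀ T C) :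
    ∃ δ : ℝ, 0 < δ ∧ ∀ (U : Set (V n)) (G : V n → ℝ), IsSolution n j θ U G Φ →
      IsCapillaryF n θ G → ∀ B : ℝ, 0 ≤ B → ∀ u ∈ sphCapBdry n θ,
        (∀ x ∈ sphCap n θ, sigmaElem n 1 G x + B * x (Fin.last n) ≤
          sigmaElem n 1 G u + B * u (Fin.last n)) → δ * (B * Real.sin θ) ≤ C := by
  have hsin := sin_angle_pos hθ
  have hcos := cos_angle_pos hθ
  obtain ⟨δ, hδ, hδ'⟩ := exists_le_esym_erase_div n j hL.pos hL.one_le hL.nonneg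
    (div_pos hcos hsin)
  refine ⟨δ, hδ, ?_⟩
  intro U G h hcap B hB u hu hmax
  have huc := bdry_subset hu
  have huU := h.mem huc
  set μ := conormal n θ u with hμ
  have hμ1 : ‖μ‖ = 1 := norm_conormal hθ hu
  have huμ : ⟪u, μ⟫ = 0 := inner_conormal hu
  have hμu : ⟪μ, u⟫ = 0 := by rw [real_inner_comm, huμ]
  have hAu : ∀ w, hessQ n G u u w = 0 := h.hessQ_self hθ huc
  have hAu' : ∀ w, hessQ n G u w u = 0 := fun w => by rw [h.hessQ_symm huU, hAu]
  obtain ⟨d, b, hbv, hbd⟩ := exists_diagonalizing_basis (fderiv ℝ (fderiv ℝ G) u)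
    (h.hessQ_symm huU) (v := ![u, μ])
    (by
      constructor
      · intro i; fin_cases i
        · exact hu.1
        · exact hμ1
      · intro i k hik
        fin_cases i <;> fin_cases k
        · exact absurd rfl hik
        · exact huμ
        · exact hμu
        · exact absurd rfl hik)
    (by
      intro i k hik
      fin_cases i <;> fin_cases k
      · exact absurd rfl hik
      · exact hAu μ
      · exact hAu' μ
      · exact absurd rfl hik)
    (by
      intro i w hw
      fin_cases i
      · exact hAu w
      · exact h.hessQ_conormal hcap hu (hw 0) (hw 1))
  set i₀ : Fin 2 ⊕ Fin d := Sum.inl 0 with hi₀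
  set m : Fin 2 ⊕ Fin d := Sum.inl 1 with hm
  have hb : b i₀ = u := hbv 0
  have hbm : b m = μ := hbv 1
  have hne : m ≠ i₀ := by simp [hm, hi₀]
  set S : Finset (Fin 2 ⊕ Fin d) := Finset.univ.erase i₀ with hS
  have hmS : m ∈ S := Finset.mem_erase.2 ⟨hne, Finset.mem_univ _⟩
  have hcardS : S.card = n := card_erase_of_basis b i₀
  have hpos := h.eigs_pos huc hb
  have h1 := h.first_tangent hL hu hb hbm hbd hmS
  have h2 := h.first_max hu hmax b i₀
  rw [← hμ] at h1 h2
  have hpm := h.wts_nonneg huc hb m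
  have h3 : ∀ i ∈ S, (wts j G u b i₀ i - wts j G u b i₀ m) * dird μ (dd G b i) u =
      Real.cos θ / Real.sin θ *
        ((wts j G u b i₀ i - wts j G u b i₀ m) * (eigs G u b m - eigs G u b i)) := by
    intro i hi
    rcases eq_or_ne i m with rfl | him
    · simp
    have h4 := h.sin_mul_dird_conormal hcap hu (b.orthonormal.1 i)
      (by rw [← hb]; exact inner_basis_eq_zero b (Finset.ne_of_mem_erase hi).symm)
      (by rw [← hμ, ← hbm]; exact inner_basis_eq_zero b him.symm)
    rw [← hμ] at h4
    have h5 : dird μ (dd G b i) u =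
        Real.cos θ / Real.sin θ * (eigs G u b m - eigs G u b i) := by
      rw [eigs, eigs, hbm]
      change Real.sin θ * dird μ (dd G b i) u = _ at h4
      field_simp
      linarith
    rw [h5]; ring
  have h6 : wts j G u b i₀ m * (B * Real.sin θ) + Real.cos θ / Real.sin θ *
      ∑ i ∈ S, (wts j G u b i₀ i - wts j G u b i₀ m) * (eigs G u b m - eigs G u b i) ≤ C := by
    rw [Finset.mul_sum, ← Finset.sum_congr rfl h3]
    simp only [sub_mul, Finset.sum_sub_distrib]
    rw [← Finset.mul_sum]
    nlinarith [mul_le_mul_of_nonneg_left h2 hpm]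
  have h7 : 0 ≤ ∑ i ∈ S, (wts j G u b i₀ i - wts j G u b i₀ m) *
      (eigs G u b m - eigs G u b i) := by
    refine Finset.sum_nonneg fun i hi => ?_
    have h8 := sub_mul_esym_erase_sub_nonneg j (fun i hi => (hpos i hi).le) hmS hi
    rw [wts, wts, ← sub_div, div_mul_eq_mul_div, mul_comm]
    exact div_nonneg h8 (esym_nonneg _ fun k hk => (hpos k hk).le)
  have h9 : 0 ≤ wts j G u b i₀ m * (B * Real.sin θ) := by positivity
  have h10 : δ ≤ wts j G u b i₀ m := by
    refine hδ' S (eigs G u b) hcardS h.le_dim hpos ?_ ?_ m hmS (le_trans ?_ h6)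
    · rw [h.esym_eigs huc hb hbd]; exact hL.lower u huc
    · rw [h.esym_eigs huc hb hbd]; exact hL.upper u huc
    · exact le_add_of_nonneg_left h9
  have h11 : 0 ≤ Real.cos θ / Real.sin θ * ∑ i ∈ S, (wts j G u b i₀ i - wts j G u b i₀ m) *
      (eigs G u b m - eigs G u b i) := mul_nonneg (div_pos hcos hsin).le h7
  have h12 : δ * (B * Real.sin θ) ≤ wts j G u b i₀ m * (B * Real.sin θ) :=
    mul_le_mul_of_nonneg_right h10 (by positivity)
  linarith

lemma IsSolution.continuousOn_sigmaElem_one (h : IsSolution n j θ U G Φ) :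
    ContinuousOn (sigmaElem n 1 G) (sphCap n θ) := by
  set b := EuclideanSpace.basisFun (Fin (n + 1)) ℝ with hb
  have h1 : ContinuousOn (fun x => ∑ i ∈ Finset.univ.erase 0, dd G b i x + dd G b 0 x)
      (sphCap n θ) := by
    refine ContinuousOn.add (continuousOn_finsetSum _ fun i _ => ?_) ?_
    · exact (h.contDiffOn_dd b i).continuousOn.mono fun x hx => h.mem hx
    · exact (h.contDiffOn_dd b 0).continuousOn.mono fun x hx => h.mem hx
  exact h1.congr fun x hx => h.sigmaElem_one (h.mem hx) b 0

end BoundaryMaximum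

/-- `σ₁` (trace) estimate for solutions of the capillary `σ_k` problem. -/
theorem capillary_sigma1_estimate (n k : ℕ) (hn : 1 ≤ n) (θ : ℝ)
    (hθ : θ ∈ Ioo 0 (π / 2)) (hk : 1 ≤ k) (hkn : k ≤ n)
    (φ Φ : V n → ℝ) (hφpos : ∀ ζ ∈ capCap n θ, 0 < φ ζ) (hΦ : IsHomExt n θ ⊤ φ Φ) :
    ∃ C : ℝ, 0 < C ∧
      ∀ s G : V n → ℝ, IsHomExt n θ ⊤ s G → IsCapillaryF n θ G → TauPos n θ G →
        (∀ ζ ∈ capCap n θ, sigmaElem n k G (ζ + Real.cos θ • Etop n) = φ ζ) →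
        ∀ ζ ∈ capCap n θ, sigmaElem n 1 G (ζ + Real.cos θ • Etop n) ≤ C := by
  have hΦcap : ∀ u ∈ sphCap n θ, Φ u = φ (u - Real.cos θ • Etop n) := by
    intro u hu
    rw [← hΦ.2.2 _ (sub_mem_capCap hu), sub_add_cancel]
  obtain ⟨UΦ, hUΦ, hUΦc, hΦs⟩ := hΦ.1
  obtain ⟨W, m₀, T, C, hL⟩ := exists_logBounds hUΦ hUΦc hΦs fun u hu => by
    rw [hΦcap u hu]; exact hφpos _ (sub_mem_capCap hu)
  obtain ⟨j, rfl⟩ : ∃ j, k = j + 1 := ⟨k - 1, by omega⟩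
  obtain ⟨δ, hδ, hbdry⟩ := exists_boundary_const hθ j hL
  have hsin := sin_angle_pos hθ
  have hC := hL.nonneg
  have hT : 0 < T := by linarith [hL.one_le]
  set B : ℝ := (C + 1) / (δ * Real.sin θ) with hB
  have hB0 : 0 < B := by positivity
  refine ⟨B + n * (j + 1 + 2 * C) * T / (j + 1) + B, by positivity, ?_⟩
  intro s G hG hcap hτ hσ ζ hζ
  obtain ⟨U, hU, hUc, hGs⟩ := hG.1
  have hsol : IsSolution n j θ U G Φ :=
    { isOpen := hU
      coneCap_subset := hUc
      contDiffOn := hGs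
      hom := hG.2.1
      angle := hθ
      tauPos := hτ
      le_dim := hkn
      eq := fun u hu => by
        rw [hΦcap u hu, ← hσ _ (sub_mem_capCap hu), sub_add_cancel] }
  have hζu := add_mem_sphCap hζ
  have hcont : ContinuousOn (fun x : V n => sigmaElem n 1 G x + B * x (Fin.last n))
      (sphCap n θ) :=
    hsol.continuousOn_sigmaElem_one.add
      (by fun_prop : Continuous fun x : V n => B * x (Fin.last n)).continuousOn
  obtain ⟨u, hu, hmax⟩ := (isCompact_sphCap n θ).exists_isMaxOn ⟨_, hζu⟩ hcont
  have hmax' : ∀ x ∈ sphCap n θ, sigmaElem n 1 G x + B * x (Fin.last n) ≤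
      sigmaElem n 1 G u + B * u (Fin.last n) := fun x hx => hmax hx
  have hlt : Real.cos θ < u (Fin.last n) := by
    refine lt_of_le_of_ne hu.2 fun heq => ?_
    have h1 := hbdry U G hsol hcap B hB0.le u ⟨hu.1, heq.symm⟩ hmax'
    have h2 : δ * (B * Real.sin θ) = C + 1 := by
      rw [hB]; field_simp
    linarith
  have h1 := hsol.trace_le_of_interior_max hL hB0.le hu hlt hmax'
  have h2 := hmax' _ hζu
  have h3 : u (Fin.last n) ≤ 1 := by
    rw [← inner_Etop]
    refine (real_inner_le_norm _ _).trans ?_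
    rw [hu.1, norm_Etop, one_mul]
  have h4 : 0 ≤ (ζ + Real.cos θ • Etop n) (Fin.last n) :=
    (cos_angle_pos hθ).le.trans hζu.2
  have h5 : B * u (Fin.last n) ≤ B := by nlinarith
  have h6 := mul_nonneg hB0.le h4
  linarith
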